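/- Let $1 < p < \infty$, $\mathcal{S}$ a sparse family of dyadic cubes, $w \in A_p$ with $\sigma = w^{1-p'}$, and $R$ a cube. Then $(\int_R (\sum_{Q \in \mathcal{S}, Q\subseteq R}(\fint_Q w)\chi_Q)^{p'}\sigma\,dx)^{1/p'} \lesssim (1+\log[w]_{A_p})^{1/p}\,[w]_{(A_p)^{1/p}(A_\infty^{\exp})^{1/p'}}\, w(R)^{1/p'}$. -/

import Mathlib

open MeasureTheory Set
open scoped ENNReal

noncomputable section

/-- A (closed, axis-parallel, nondegenerate) cube in `ℝⁿ`. -/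
def IsCube {n : ℕ} (Q : Set (Fin n → ℝ)) : Prop :=
  ∃ (a : Fin n → ℝ) (l : ℝ), 0 < l ∧ Q = Set.Icc a (a + fun _ => l)

/-- The average `⨍_Q f` of `f` over `Q` (w.r.t. Lebesgue measure). -/
def avg {n : ℕ} (Q : Set (Fin n → ℝ)) (f : (Fin n → ℝ) → ℝ) : ℝ :=
  (volume Q).toReal⁻¹ * ∫ x in Q, f x

/-- The `A_p` quantity `A_p(w,Q) = (⨍_Q w) (⨍_Q w^{-1/(p-1)})^{p-1}`. -/
def ApQ {n : ℕ} (p : ℝ) (w : (Fin n → ℝ) → ℝ) (Q : Set (Fin n → ℝ)) : ℝ :=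
  avg Q w * (avg Q fun x => w x ^ (-(1 / (p - 1)))) ^ (p - 1)

/-- The exponential `A_∞` quantity `A_∞^exp(w,Q) = (⨍_Q w) exp(-⨍_Q log w)`. -/
def AexpQ {n : ℕ} (w : (Fin n → ℝ) → ℝ) (Q : Set (Fin n → ℝ)) : ℝ :=
  avg Q w * Real.exp (-(avg Q fun x => Real.log (w x)))

/-- A dyadic cube of generation `k` (half-open, side length `2^k`). -/
def IsDyadicCubeOf {n : ℕ} (k : ℤ) (Q : Set (Fin n → ℝ)) : Prop :=
  ∃ a : Fin n → ℝ, Q = Set.univ.pi fun i => Set.Ico (a i) (a i + (2 : ℝ) ^ k)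

/-- A dyadic grid: a collection of cubes of side lengths `2^k`, pairwise nested or
disjoint, partitioning `ℝⁿ` at each scale. -/
def IsDyadicGrid {n : ℕ} (𝒟 : Set (Set (Fin n → ℝ))) : Prop :=
  (∀ Q ∈ 𝒟, ∃ k : ℤ, IsDyadicCubeOf k Q) ∧
  (∀ Q ∈ 𝒟, ∀ P ∈ 𝒟, Q ⊆ P ∨ P ⊆ Q ∨ Disjoint Q P) ∧
  (∀ k : ℤ, ⋃₀ {Q | Q ∈ 𝒟 ∧ IsDyadicCubeOf k Q} = Set.univ ∧
    Set.PairwiseDisjoint {Q | Q ∈ 𝒟 ∧ IsDyadicCubeOf k Q} id)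

/-- The union of the strict subcubes of `Q` belonging to the family `𝒮`. -/
def strictUnion {n : ℕ} (𝒮 : Set (Set (Fin n → ℝ))) (Q : Set (Fin n → ℝ)) :
    Set (Fin n → ℝ) :=
  ⋃ Q' ∈ {Q' | Q' ∈ 𝒮 ∧ Q' ⊂ Q}, Q'

/-- The "major subset" `E_Q = Q \ ⋃ {Q' ∈ 𝒮 : Q' ⊊ Q}`. -/
def Eset {n : ℕ} (𝒮 : Set (Set (Fin n → ℝ))) (Q : Set (Fin n → ℝ)) :
    Set (Fin n → ℝ) :=
  Q \ strictUnion 𝒮 Q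

/-- A sparse family: for each `Q ∈ 𝒮`, `|⋃ {Q' ∈ 𝒮 : Q' ⊊ Q}| ≤ |Q|/2`. -/
def IsSparse {n : ℕ} (𝒮 : Set (Set (Fin n → ℝ))) : Prop :=
  ∀ Q ∈ 𝒮, volume (strictUnion 𝒮 Q) ≤ volume Q / 2

/-- The sparse operator `T^𝒮 f = ∑_{Q ∈ 𝒮} (⨍_Q f) χ_Q` (with values in `ℝ≥0∞`). -/
def sparseT {n : ℕ} (𝒮 : Set (Set (Fin n → ℝ))) (f : (Fin n → ℝ) → ℝ)
    (x : Fin n → ℝ) : ℝ≥0∞ :=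
  ∑' Q : 𝒮, Set.indicator Q.1 (fun _ => ENNReal.ofReal (avg Q.1 f)) x

/-!
Write `⟨f⟩_Q` for averages and `p'` for the conjugate exponent. Freezing `⌊log A_p(w, Q)⌋` splits
`𝒮` into at most `1 + log [w]_{A_p}` subfamilies, and the power mean inequality glues their
contributions at the price of `(1 + log [w]_{A_p}) ^ (p' - 1)`. Over a frozen subfamily,
`⟨w⟩_Q ⟨σ⟩_Q` is a power of the nearly constant `A_p(w, Q)` times `⟨w⟩_Q ^ α ⟨σ⟩_Q ^ β` with
`α + β < 1`, so Kolmogorov's inequality makes `Q ↦ ⟨w⟩_Q σ(Q)` a Carleson sequence. This gives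
the quasi-orthogonality `∫ (∑ ⟨w⟩_Q χ_Q) ^ p' σ ≲ ∑ ⟨w⟩_Q ^ p' σ(Q)`. Finally
`⟨w⟩_Q ^ p' ⟨σ⟩_Q = A_p(w, Q) ^ (p' / p) A_∞^exp(w, Q) exp ⟨log w⟩_Q`, and
`∑ exp ⟨log w⟩_Q |Q| ≲ w(R)`: by Jensen, `exp ⟨log w⟩_Q ≲ ⟨2 ^ (-N_Q) w⟩_Q`, where `N_Q` counts the
members of the family inside `Q` and has bounded average, and `∑ 2 ^ (-N_Q) χ_Q ≤ 1` pointwise.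
-/

section Forest

variable {α : Type*} [PartialOrder α] {s : Finset α}

open Classical in
/-- The sum of `f` over the members of `s` that lie below `b`. -/
def sumBelow (s : Finset α) (f : α → ℝ) (b : α) : ℝ := ∑ c ∈ s with c ≤ b, f c

open Classical in
/-- The sum of `f` over the members of `s` that lie above `b`. -/
def sumAbove (s : Finset α) (f : α → ℝ) (b : α) : ℝ := ∑ c ∈ s with b ≤ c, f c

theorem sumBelow_nonneg {f : α → ℝ} (hf : ∀ b ∈ s, 0 ≤ f b) (b : α) : 0 ≤ sumBelow s f b := by
  classical exact Finset.sum_nonneg fun c hc => hf c (Finset.mem_filter.1 hc).1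

theorem sumBelow_congr {f g : α → ℝ} (hfg : ∀ b ∈ s, f b = g b) (b : α) :
    sumBelow s f b = sumBelow s g b := by
  classical exact Finset.sum_congr rfl fun c hc => hfg c (Finset.mem_filter.1 hc).1

theorem sumBelow_of_forall_le {b : α} (hb : ∀ c ∈ s, c ≤ b) (f : α → ℝ) :
    sumBelow s f b = ∑ c ∈ s, f c := by
  classical exact congrArg (∑ c ∈ ·, f c) (Finset.filter_true_of_mem hb)

theorem le_sumAbove {f : α → ℝ} (hf : ∀ b ∈ s, 0 ≤ f b) {b : α} (hb : b ∈ s) :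
    f b ≤ sumAbove s f b := by
  classical
  exact Finset.single_le_sum (f := f) (s := s.filter (b ≤ ·))
    (fun c hc => hf c (Finset.mem_filter.1 hc).1) (Finset.mem_filter.2 ⟨hb, le_rfl⟩)

theorem sumAbove_filter {P : α → Prop} [DecidablePred P] (f : α → ℝ) {b : α}
    (hP : ∀ c, b ≤ c → P c) : sumAbove (s.filter P) f b = sumAbove s f b := by
  rw [sumAbove, sumAbove, Finset.filter_filter]
  congr! 2 with c
  exact and_iff_right_of_imp (hP c)

theorem sum_comp_sumBelow_sub_of_isChain (hs : IsChain (· ≤ ·) (s : Set α)) (f : α → ℝ)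
    (φ : ℝ → ℝ) :
    ∑ b ∈ s, (φ (sumBelow s f b) - φ (sumBelow s f b - f b)) = φ (∑ b ∈ s, f b) - φ 0 := by
  classical
  induction s using Finset.strongInduction with
  | H s ih =>
    rcases s.eq_empty_or_nonempty with rfl | hne
    · simp
    obtain ⟨m, hm⟩ := s.exists_maximal hne
    have hle : ∀ b ∈ s, b ≤ m := fun b hb =>
      (hs.total hb hm.prop).elim id fun hmb => hm.le_of_ge hb hmb
    have herase : ∀ b ∈ s.erase m, sumBelow s f b = sumBelow (s.erase m) f b := fun b hb => by
      have hmb : ¬ m ≤ b := fun h =>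
        Finset.ne_of_mem_erase hb ((hle b (Finset.mem_of_mem_erase hb)).antisymm h)
      rw [sumBelow, sumBelow, Finset.filter_erase, Finset.erase_eq_of_notMem (by simp [hmb])]
    have hih := ih _ (Finset.erase_ssubset hm.prop)
      (hs.mono (Finset.coe_subset.2 (s.erase_subset m)))
    rw [← Finset.add_sum_erase s _ hm.prop, Finset.sum_congr rfl fun b hb => by rw [herase b hb],
      hih, sumBelow_of_forall_le hle, ← Finset.sum_erase_eq_sub hm.prop]
    ring

theorem sum_comp_sumAbove_sub_of_isChain (hs : IsChain (· ≤ ·) (s : Set α)) (f : α → ℝ)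
    (φ : ℝ → ℝ) :
    ∑ b ∈ s, (φ (sumAbove s f b) - φ (sumAbove s f b - f b)) = φ (∑ b ∈ s, f b) - φ 0 :=
  sum_comp_sumBelow_sub_of_isChain (α := αᵒᵈ) hs.symm f φ

theorem sum_rpow_sumBelow_one_le_of_isChain (hs : IsChain (· ≤ ·) (s : Set α)) {τ : ℝ} (h0 : 0 < τ)
    (h1 : τ < 1) : ∑ b ∈ s, τ ^ sumBelow s 1 b ≤ τ / (1 - τ) := by
  have htel := sum_comp_sumBelow_sub_of_isChain hs 1 fun t => τ ^ t
  have hstep : ∀ t : ℝ, τ ^ t - τ ^ (t - 1) = τ ^ t * (1 - τ⁻¹) := fun t => by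
    rw [Real.rpow_sub h0, Real.rpow_one]; ring
  simp only [Pi.one_apply, hstep, ← Finset.sum_mul, Real.rpow_zero] at htel
  have hpos := Real.rpow_pos_of_pos h0 (∑ _b ∈ s, (1 : ℝ))
  rw [le_div_iff₀ (sub_pos.2 h1)]
  have hτ : τ⁻¹ * τ = 1 := inv_mul_cancel₀ h0.ne'
  linear_combination (-τ) * htel + hpos * τ - (∑ b ∈ s, τ ^ sumBelow s 1 b) * hτ

theorem sum_rpow_sumAbove_one_le_of_isChain (hs : IsChain (· ≤ ·) (s : Set α)) {τ : ℝ} (h0 : 0 < τ)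
    (h1 : τ < 1) : ∑ b ∈ s, τ ^ sumAbove s 1 b ≤ τ / (1 - τ) :=
  sum_rpow_sumBelow_one_le_of_isChain (α := αᵒᵈ) hs.symm h0 h1

/-- A finite subset of a partial order whose members have totally ordered sets of ancestors. -/
def IsForest (s : Finset α) : Prop :=
  ∀ b ∈ s, IsChain (· ≤ ·) {c | c ∈ s ∧ b ≤ c}

theorem IsForest.sum_mul_comp_sumAbove (hs : IsForest s) (f c : α → ℝ) (φ : ℝ → ℝ) :
    ∑ b ∈ s, c b * (φ (sumAbove s f b) - φ 0) =
      ∑ b ∈ s, (φ (sumAbove s f b) - φ (sumAbove s f b - f b)) * sumBelow s c b := by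
  classical
  have htel : ∀ b ∈ s, φ (sumAbove s f b) - φ 0 =
      ∑ d ∈ s with b ≤ d, (φ (sumAbove s f d) - φ (sumAbove s f d - f d)) := fun b hb => by
    have hchain : IsChain (· ≤ ·) ((s.filter (b ≤ ·) : Finset α) : Set α) := by
      simpa using hs b hb
    calc φ (sumAbove s f b) - φ 0
        = ∑ d ∈ s with b ≤ d, (φ (sumAbove (s.filter (b ≤ ·)) f d) -
            φ (sumAbove (s.filter (b ≤ ·)) f d - f d)) :=
          (sum_comp_sumAbove_sub_of_isChain hchain f φ).symm
      _ = _ := Finset.sum_congr rfl fun d hd => by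
          rw [sumAbove_filter f fun e he => (Finset.mem_filter.1 hd).2.trans he]
  calc ∑ b ∈ s, c b * (φ (sumAbove s f b) - φ 0)
      = ∑ b ∈ s, ∑ d ∈ s with b ≤ d, (φ (sumAbove s f d) - φ (sumAbove s f d - f d)) * c b :=
        Finset.sum_congr rfl fun b hb => by rw [htel b hb, mul_comm, Finset.sum_mul]
    _ = ∑ d ∈ s, ∑ b ∈ s with b ≤ d, (φ (sumAbove s f d) - φ (sumAbove s f d - f d)) * c b :=
        Finset.sum_comm' fun b d => by simp only [Finset.mem_filter]; tauto
    _ = _ := by simp only [sumBelow, Finset.mul_sum]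

theorem IsForest.sum_mul_comp_sumAbove_le (hs : IsForest s) {f c e : α → ℝ} {φ : ℝ → ℝ} {K : ℝ}
    (hK : 0 ≤ K) (hc : ∀ b ∈ s, 0 ≤ c b) (hcar : ∀ b ∈ s, sumBelow s c b ≤ K * c b)
    (hφ : ∀ b ∈ s, 0 ≤ φ (sumAbove s f b)) (he : ∀ b ∈ s, 0 ≤ e b)
    (hinc : ∀ b ∈ s, φ (sumAbove s f b) - φ (sumAbove s f b - f b) ≤
      (1 + 2 * K)⁻¹ * φ (sumAbove s f b) + e b) :
    ∑ b ∈ s, c b * φ (sumAbove s f b) ≤ 2 * (φ 0 * ∑ b ∈ s, c b + K * ∑ b ∈ s, c b * e b) := by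
  set Y := ∑ b ∈ s, c b * φ (sumAbove s f b) with hY
  have hY0 : 0 ≤ Y := Finset.sum_nonneg fun b hb => mul_nonneg (hc b hb) (hφ b hb)
  have hparts : Y - φ 0 * ∑ b ∈ s, c b ≤
      K * (1 + 2 * K)⁻¹ * Y + K * ∑ b ∈ s, c b * e b := by
    calc Y - φ 0 * ∑ b ∈ s, c b = ∑ b ∈ s, c b * (φ (sumAbove s f b) - φ 0) := by
          simp only [mul_sub, Finset.sum_sub_distrib, ← Finset.sum_mul, mul_comm, hY]
      _ = ∑ b ∈ s, (φ (sumAbove s f b) - φ (sumAbove s f b - f b)) * sumBelow s c b :=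
          hs.sum_mul_comp_sumAbove f c φ
      _ ≤ ∑ b ∈ s, ((1 + 2 * K)⁻¹ * φ (sumAbove s f b) + e b) * (K * c b) := by
          refine Finset.sum_le_sum fun b hb => mul_le_mul (hinc b hb) (hcar b hb)
            (sumBelow_nonneg hc b) ?_
          have := hφ b hb
          have := he b hb
          positivity
      _ = _ := by
          rw [hY, Finset.mul_sum, Finset.mul_sum, ← Finset.sum_add_distrib]
          exact Finset.sum_congr rfl fun b _ => by ring
  have hhalf : K * (1 + 2 * K)⁻¹ ≤ 1 / 2 := by
    rw [← div_eq_mul_inv, div_le_div_iff₀ (by positivity) two_pos]; linarith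
  linarith [mul_le_mul_of_nonneg_right hhalf hY0]

theorem IsForest.sum_mul_rpow_neg_sumAbove_le (hs : IsForest s) {c : α → ℝ} {K : ℝ} (hK : 0 < K)
    (hc : ∀ b ∈ s, 0 ≤ c b) (hcar : ∀ b ∈ s, sumBelow s c b ≤ K * c b) :
    ∑ b ∈ s, c b * (2 * K / (1 + 2 * K)) ^ (-sumAbove s 1 b) ≤ 2 * ∑ b ∈ s, c b := by
  set τ := 2 * K / (1 + 2 * K) with hτ
  have hτ0 : 0 < τ := by positivity
  have hstep : ∀ t : ℝ, τ ^ (-t) - τ ^ (-(t - 1)) = (1 + 2 * K)⁻¹ * τ ^ (-t) := fun t => by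
    rw [show -(t - 1) = -t + 1 by ring, Real.rpow_add_one hτ0.ne', hτ]
    field_simp
    ring
  have h := hs.sum_mul_comp_sumAbove_le (f := 1) (e := 0) (φ := fun t => τ ^ (-t)) hK.le hc hcar
    (fun b _ => by positivity) (fun _ _ => le_rfl) fun b _ => by
      simpa only [Pi.one_apply, Pi.zero_apply, add_zero] using (hstep _).le
  simpa using h

end Forest

section PowerInequalities

variable {a y : ℝ}

theorem rpow_sub_rpow_sub_le_mul {q : ℝ} (hq : 1 ≤ q) (ha : 0 ≤ a) (hay : a ≤ y) :
    y ^ q - (y - a) ^ q ≤ q * (a * y ^ (q - 1)) := by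
  rcases (ha.trans hay).eq_or_lt with rfl | hy
  · simp [le_antisymm hay ha]
  have hbern : 1 + q * (-(a / y)) ≤ (1 + -(a / y)) ^ q :=
    one_add_mul_self_le_rpow_one_add (neg_le_neg ((div_le_one hy).2 hay)) hq
  have hfac : y - a = y * (1 + -(a / y)) := by field_simp; ring
  have hpow : y ^ q = y ^ (q - 1) * y := by rw [← Real.rpow_add_one hy.ne', sub_add_cancel]
  rw [hfac, Real.mul_rpow hy.le (by rw [← sub_eq_add_neg, sub_nonneg, div_le_one hy]; exact hay)]
  calc y ^ q - y ^ q * (1 + -(a / y)) ^ q ≤ y ^ q - y ^ q * (1 + q * (-(a / y))) := by gcongr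
    _ = q * (a * y ^ (q - 1)) := by rw [hpow]; field_simp; ring

theorem rpow_sub_rpow_sub_le_add {r δ : ℝ} (hr : 0 < r) (hδ0 : 0 < δ) (hδ1 : δ < 1) (ha : 0 ≤ a)
    (hay : a ≤ y) :
    y ^ r - (y - a) ^ r ≤ δ * y ^ r + (a / (1 - (1 - δ) ^ (1 / r))) ^ r := by
  set ε := 1 - (1 - δ) ^ (1 / r) with hε
  have hε0 : 0 < ε := sub_pos.2 (Real.rpow_lt_one (by linarith) (by linarith) (by positivity))
  have hy : 0 ≤ y := ha.trans hay
  rcases le_total a (ε * y) with h | h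
  · have hlow : (1 - δ) * y ^ r ≤ (y - a) ^ r :=
      calc (1 - δ) * y ^ r = ((1 - ε) * y) ^ r := by
            rw [hε, sub_sub_cancel, Real.mul_rpow (by positivity) hy, ← Real.rpow_mul (by linarith),
              one_div_mul_cancel hr.ne', Real.rpow_one]
        _ ≤ (y - a) ^ r := Real.rpow_le_rpow (mul_nonneg (by
            rw [hε, sub_sub_cancel]; exact Real.rpow_nonneg (by linarith) _) hy) (by linarith) hr.le
    linarith [show 0 ≤ (a / ε) ^ r by positivity]
  · have hup : y ^ r ≤ (a / ε) ^ r :=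
      Real.rpow_le_rpow hy ((le_div_iff₀ hε0).2 (by linarith)) hr.le
    linarith [Real.rpow_nonneg (sub_nonneg.2 hay) r, mul_nonneg hδ0.le (Real.rpow_nonneg hy r)]

end PowerInequalities

section Laminar

variable {X : Type*}

/-- A family of sets any two of which are nested or disjoint. -/
def IsLaminar (𝒮 : Set (Set X)) : Prop :=
  ∀ Q ∈ 𝒮, ∀ P ∈ 𝒮, Q ⊆ P ∨ P ⊆ Q ∨ Disjoint Q P

/-- The number of members of `𝒢` that contain `x` and are contained in `Q`. -/
def overlapBelow (𝒢 : Finset (Set X)) (Q : Set X) (x : X) : ℝ :=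
  sumBelow 𝒢 (fun P => P.indicator 1 x) Q

theorem overlapBelow_nonneg (𝒢 : Finset (Set X)) (Q : Set X) (x : X) : 0 ≤ overlapBelow 𝒢 Q x :=
  sumBelow_nonneg (fun _ _ => indicator_nonneg (fun _ _ => zero_le_one) x) Q

namespace IsLaminar

theorem mono {𝒮 𝒯 : Set (Set X)} (h : IsLaminar 𝒯) (hsub : 𝒮 ⊆ 𝒯) : IsLaminar 𝒮 :=
  fun Q hQ P hP => h Q (hsub hQ) P (hsub hP)

theorem isChain {𝒮 : Set (Set X)} (h : IsLaminar 𝒮) {x : X} (hx : ∀ Q ∈ 𝒮, x ∈ Q) :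
    IsChain (· ≤ ·) 𝒮 := fun Q hQ P hP _ =>
  (h Q hQ P hP).imp_right (·.resolve_right (not_disjoint_iff.2 ⟨x, hx Q hQ, hx P hP⟩))

variable {𝒢 : Finset (Set X)}

theorem isForest (h : IsLaminar (𝒢 : Set (Set X))) (hne : ∀ Q ∈ 𝒢, Q.Nonempty) : IsForest 𝒢 :=
  fun Q hQ => have ⟨_, hx⟩ := hne Q hQ
    (h.mono fun _ hP => hP.1).isChain fun _ hP => hP.2 hx

open Classical in
theorem isChain_filter_mem (h : IsLaminar (𝒢 : Set (Set X))) (x : X) :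
    IsChain (· ≤ ·) ((𝒢.filter (x ∈ ·) : Finset (Set X)) : Set (Set X)) :=
  (h.mono fun _ hP => (Finset.mem_filter.1 hP).1).isChain fun _ hP => (Finset.mem_filter.1 hP).2

theorem rpow_sum_indicator_le (h : IsLaminar (𝒢 : Set (Set X))) {q : ℝ} (hq : 1 ≤ q)
    {a : Set X → ℝ} (ha : ∀ Q ∈ 𝒢, 0 ≤ a Q) (x : X) :
    (∑ Q ∈ 𝒢, Q.indicator (fun _ => a Q) x) ^ q ≤
      ∑ Q ∈ 𝒢, Q.indicator (fun _ => q * (a Q * sumAbove 𝒢 a Q ^ (q - 1))) x := by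
  classical
  have htel := sum_comp_sumAbove_sub_of_isChain (h.isChain_filter_mem x) a (· ^ q)
  rw [Finset.sum_indicator_eq_sum_filter, Finset.sum_indicator_eq_sum_filter]
  simp only [Real.zero_rpow (by linarith : q ≠ 0), sub_zero] at htel
  rw [← htel]
  refine Finset.sum_le_sum fun Q hQ => ?_
  obtain ⟨hQ, hx⟩ := Finset.mem_filter.1 hQ
  rw [sumAbove_filter (b := Q) a fun P hP => mem_of_mem_of_subset hx hP]
  exact rpow_sub_rpow_sub_le_mul hq (ha Q hQ) (le_sumAbove ha hQ)

theorem sum_rpow_sumAbove_one_le (h : IsLaminar (𝒢 : Set (Set X))) {τ : ℝ} (h0 : 0 < τ)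
    (h1 : τ < 1) (x : X) :
    ∑ Q ∈ 𝒢, Q.indicator (fun _ => τ ^ sumAbove 𝒢 1 Q) x ≤ τ / (1 - τ) := by
  classical
  rw [Finset.sum_indicator_eq_sum_filter]
  refine (Finset.sum_congr rfl fun Q hQ => ?_).trans_le
    (sum_rpow_sumAbove_one_le_of_isChain (h.isChain_filter_mem x) h0 h1)
  rw [sumAbove_filter (b := Q) 1 fun P hP => mem_of_mem_of_subset (Finset.mem_filter.1 hQ).2 hP]

theorem sum_rpow_overlapBelow_le (h : IsLaminar (𝒢 : Set (Set X))) {τ : ℝ} (h0 : 0 < τ)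
    (h1 : τ < 1) (x : X) :
    ∑ Q ∈ 𝒢, Q.indicator (fun x => τ ^ overlapBelow 𝒢 Q x) x ≤ τ / (1 - τ) := by
  classical
  rw [Finset.sum_indicator_eq_sum_filter]
  refine (Finset.sum_congr rfl fun Q _ => ?_).trans_le
    (sum_rpow_sumBelow_one_le_of_isChain (h.isChain_filter_mem x) h0 h1)
  rw [overlapBelow, sumBelow, Finset.sum_indicator_eq_sum_filter, Finset.filter_comm]
  rfl

end IsLaminar

end Laminar

section QuasiOrthogonality

variable {X : Type*} [MeasurableSpace X] {ν : Measure X} {𝒢 : Finset (Set X)}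

/-- The constant in the `L^q` quasi-orthogonality of a Carleson family with constant `K`. -/
def quasiOrthogonalityConst (K q : ℝ) : ℝ :=
  2 * q * K * (1 - (1 - (1 + 2 * K)⁻¹) ^ (1 / (q - 1))) ^ (-(q - 1))

theorem quasiOrthogonalityConst_pos {K q : ℝ} (hK : 0 < K) (hq : 1 < q) :
    0 < quasiOrthogonalityConst K q := by
  have hδ : (1 + 2 * K)⁻¹ < 1 := inv_lt_one_of_one_lt₀ (by linarith)
  have hε : (1 - (1 + 2 * K)⁻¹) ^ (1 / (q - 1)) < 1 :=
    Real.rpow_lt_one (by linarith) (by linarith [show 0 < (1 + 2 * K)⁻¹ by positivity])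
      (one_div_pos.2 (by linarith))
  have := Real.rpow_pos_of_pos (sub_pos.2 hε) (-(q - 1))
  unfold quasiOrthogonalityConst
  positivity

theorem IsForest.sum_mul_rpow_sumAbove_le {α : Type*} [PartialOrder α] {s : Finset α}
    (hs : IsForest s) {a c : α → ℝ} {K r : ℝ} (hK : 0 < K) (hr : 0 < r) (ha : ∀ b ∈ s, 0 ≤ a b)
    (hc : ∀ b ∈ s, 0 ≤ c b) (hcar : ∀ b ∈ s, sumBelow s c b ≤ K * c b) :
    ∑ b ∈ s, c b * sumAbove s a b ^ r ≤
      2 * K * (1 - (1 - (1 + 2 * K)⁻¹) ^ (1 / r)) ^ (-r) * ∑ b ∈ s, c b * a b ^ r := by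
  have hδ : (1 + 2 * K)⁻¹ < 1 := inv_lt_one_of_one_lt₀ (by linarith)
  have hδ0 : 0 < (1 + 2 * K)⁻¹ := by positivity
  have hA : ∀ b ∈ s, 0 ≤ sumAbove s a b := fun b hb => (ha b hb).trans (le_sumAbove ha hb)
  set ε := 1 - (1 - (1 + 2 * K)⁻¹) ^ (1 / r)
  have hε0 : 0 < ε := sub_pos.2 (Real.rpow_lt_one (by linarith) (by linarith) (by positivity))
  calc ∑ b ∈ s, c b * sumAbove s a b ^ r
      ≤ 2 * (0 ^ r * ∑ b ∈ s, c b + K * ∑ b ∈ s, c b * (a b / ε) ^ r) :=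
        hs.sum_mul_comp_sumAbove_le (φ := (· ^ r)) hK.le hc hcar
          (fun b hb => Real.rpow_nonneg (hA b hb) r)
          (fun b hb => Real.rpow_nonneg (div_nonneg (ha b hb) hε0.le) r)
          fun b hb => rpow_sub_rpow_sub_le_add hr hδ0 hδ (ha b hb) (le_sumAbove ha hb)
    _ = 2 * K * ε ^ (-r) * ∑ b ∈ s, c b * a b ^ r := by
        rw [Real.zero_rpow hr.ne', zero_mul, zero_add, Finset.mul_sum, Finset.mul_sum,
          Finset.mul_sum]
        refine Finset.sum_congr rfl fun b hb => ?_
        rw [Real.div_rpow (ha b hb) hε0.le, Real.rpow_neg hε0.le]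
        ring

theorem IsLaminar.lintegral_rpow_sum_indicator_le (h : IsLaminar (𝒢 : Set (Set X)))
    (hne : ∀ Q ∈ 𝒢, Q.Nonempty) (hmeas : ∀ Q ∈ 𝒢, MeasurableSet Q) (hfin : ∀ Q ∈ 𝒢, ν Q ≠ ∞)
    {a : Set X → ℝ} (ha : ∀ Q ∈ 𝒢, 0 ≤ a Q) {K q : ℝ} (hK : 0 < K) (hq : 1 < q)
    (hcar : ∀ Q ∈ 𝒢, sumBelow 𝒢 (fun P => a P * ν.real P) Q ≤ K * (a Q * ν.real Q)) :
    ∫⁻ x, ENNReal.ofReal ((∑ Q ∈ 𝒢, Q.indicator (fun _ => a Q) x) ^ q) ∂ν ≤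
      ENNReal.ofReal (quasiOrthogonalityConst K q * ∑ Q ∈ 𝒢, a Q ^ q * ν.real Q) := by
  set b : Set X → ℝ := fun Q => q * (a Q * sumAbove 𝒢 a Q ^ (q - 1))
  have hb : ∀ Q ∈ 𝒢, 0 ≤ b Q := fun Q hQ => mul_nonneg (by linarith) (mul_nonneg (ha Q hQ)
    (Real.rpow_nonneg ((ha Q hQ).trans (le_sumAbove ha hQ)) _))
  calc ∫⁻ x, ENNReal.ofReal ((∑ Q ∈ 𝒢, Q.indicator (fun _ => a Q) x) ^ q) ∂ν
      ≤ ∫⁻ x, ∑ Q ∈ 𝒢, Q.indicator (fun _ => ENNReal.ofReal (b Q)) x ∂ν := by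
        refine lintegral_mono fun x => (ENNReal.ofReal_le_ofReal
          (h.rpow_sum_indicator_le hq.le ha x)).trans_eq ?_
        rw [ENNReal.ofReal_sum_of_nonneg fun Q hQ => indicator_nonneg (fun _ _ => hb Q hQ) x]
        exact Finset.sum_congr rfl fun Q _ =>
          (indicator_comp_of_zero (g := ENNReal.ofReal) ENNReal.ofReal_zero).symm ▸ rfl
    _ = ∑ Q ∈ 𝒢, ENNReal.ofReal (b Q) * ν Q := by
        rw [lintegral_finsetSum _ fun Q hQ => measurable_const.indicator (hmeas Q hQ)]
        exact Finset.sum_congr rfl fun Q hQ => lintegral_indicator_const (hmeas Q hQ) _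
    _ = ENNReal.ofReal (∑ Q ∈ 𝒢, b Q * ν.real Q) := by
        rw [ENNReal.ofReal_sum_of_nonneg fun Q hQ => mul_nonneg (hb Q hQ) measureReal_nonneg]
        exact Finset.sum_congr rfl fun Q hQ => by
          rw [ENNReal.ofReal_mul (hb Q hQ), ofReal_measureReal (hfin Q hQ)]
    _ ≤ _ := ENNReal.ofReal_le_ofReal <| by
        have hsum := (h.isForest hne).sum_mul_rpow_sumAbove_le hK (sub_pos.2 hq) ha
          (fun Q hQ => mul_nonneg (ha Q hQ) measureReal_nonneg) hcar
        calc ∑ Q ∈ 𝒢, b Q * ν.real Q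
            = q * ∑ Q ∈ 𝒢, a Q * ν.real Q * sumAbove 𝒢 a Q ^ (q - 1) := by
              rw [Finset.mul_sum]
              exact Finset.sum_congr rfl fun Q _ => by ring
          _ ≤ q * (_ * ∑ Q ∈ 𝒢, a Q * ν.real Q * a Q ^ (q - 1)) := by gcongr
          _ = quasiOrthogonalityConst K q * ∑ Q ∈ 𝒢, a Q * ν.real Q * a Q ^ (q - 1) := by
              rw [quasiOrthogonalityConst]; ring
          _ = _ := by
              congr 1
              refine Finset.sum_congr rfl fun Q hQ => ?_
              rw [mul_right_comm, ← Real.rpow_one_add' (ha Q hQ) (by linarith), add_sub_cancel]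

end QuasiOrthogonality

section Carleson

variable {X : Type*} [MeasurableSpace X] {μ : Measure X} {Λ : ℝ}

/-- A laminar family of measurable sets of positive finite measure satisfying the Carleson packing
condition with constant `Λ`; packing is required of the finite subfamilies only, so that no
summability question arises. -/
structure IsCarlesonFamily (μ : Measure X) (Λ : ℝ) (𝒮 : Set (Set X)) : Prop where
  measurableSet : ∀ Q ∈ 𝒮, MeasurableSet Q
  measure_ne_zero : ∀ Q ∈ 𝒮, μ Q ≠ 0
  measure_ne_top : ∀ Q ∈ 𝒮, μ Q ≠ ∞
  laminar : IsLaminar 𝒮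
  packing : ∀ 𝒢 : Finset (Set X), ↑𝒢 ⊆ 𝒮 → ∀ Q ∈ 𝒢, sumBelow 𝒢 μ.real Q ≤ Λ * μ.real Q

theorem IsCarlesonFamily.mono {𝒮 𝒯 : Set (Set X)} (h : IsCarlesonFamily μ Λ 𝒯) (hsub : 𝒮 ⊆ 𝒯) :
    IsCarlesonFamily μ Λ 𝒮 where
  measurableSet Q hQ := h.measurableSet Q (hsub hQ)
  measure_ne_zero Q hQ := h.measure_ne_zero Q (hsub hQ)
  measure_ne_top Q hQ := h.measure_ne_top Q (hsub hQ)
  laminar := h.laminar.mono hsub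
  packing 𝒢 h𝒢 := h.packing 𝒢 (h𝒢.trans hsub)

theorem sum_setIntegral_mul_le {𝒢 : Finset (Set X)} {S : Set X} (hmeas : ∀ P ∈ 𝒢, MeasurableSet P)
    (hsub : ∀ P ∈ 𝒢, P ⊆ S) {f : X → ℝ} {g : Set X → X → ℝ} {B : ℝ} (hf : ∀ x, 0 ≤ f x)
    (hfS : IntegrableOn f S μ) (hgf : ∀ P ∈ 𝒢, IntegrableOn (fun x => g P x * f x) P μ)
    (hg : ∀ x, ∑ P ∈ 𝒢, P.indicator (g P) x ≤ B) :
    ∑ P ∈ 𝒢, ∫ x in P, g P x * f x ∂μ ≤ B * ∫ x in S, f x ∂μ := by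
  have hint : ∀ P ∈ 𝒢, IntegrableOn (P.indicator fun x => g P x * f x) S μ := fun P hP =>
    ((integrable_indicator_iff (hmeas P hP)).2 (hgf P hP)).integrableOn
  calc ∑ P ∈ 𝒢, ∫ x in P, g P x * f x ∂μ
      = ∑ P ∈ 𝒢, ∫ x in S, P.indicator (fun x => g P x * f x) x ∂μ :=
        Finset.sum_congr rfl fun P hP => by
          rw [setIntegral_indicator (hmeas P hP), inter_eq_right.2 (hsub P hP)]
    _ = ∫ x in S, ∑ P ∈ 𝒢, P.indicator (fun x => g P x * f x) x ∂μ :=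
        (integral_finsetSum 𝒢 hint).symm
    _ ≤ ∫ x in S, B * f x ∂μ := by
        refine integral_mono (integrable_finsetSum 𝒢 hint) (hfS.const_mul B) fun x => ?_
        simpa only [indicator_mul_left, ← Finset.sum_mul] using
          mul_le_mul_of_nonneg_right (hg x) (hf x)
    _ = B * ∫ x in S, f x ∂μ := integral_const_mul B f

namespace IsCarlesonFamily

variable {𝒢 : Finset (Set X)}

theorem measureReal_pos {𝒮 : Set (Set X)} (h : IsCarlesonFamily μ Λ 𝒮) {Q : Set X} (hQ : Q ∈ 𝒮) :
    0 < μ.real Q :=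
  ENNReal.toReal_pos (h.measure_ne_zero Q hQ) (h.measure_ne_top Q hQ)

theorem nonempty {𝒮 : Set (Set X)} (h : IsCarlesonFamily μ Λ 𝒮) {Q : Set X} (hQ : Q ∈ 𝒮) :
    Q.Nonempty :=
  nonempty_of_measure_ne_zero (h.measure_ne_zero Q hQ)

theorem isForest (h : IsCarlesonFamily μ Λ (𝒢 : Set (Set X))) : IsForest 𝒢 :=
  h.laminar.isForest fun _ hQ => h.nonempty hQ

theorem sum_rpow_mul_setIntegral_div_setAverage_le (h : IsCarlesonFamily μ Λ (𝒢 : Set (Set X)))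
    {S : Set X} (hfin : μ S ≠ ∞) (hsub : ∀ P ∈ 𝒢, P ⊆ S) {f : X → ℝ} (hf : ∀ x, 0 ≤ f x)
    (hfS : IntegrableOn f S μ) (hpos : 0 < ⨍ x in S, f x ∂μ) {τ : ℝ} (h0 : 0 < τ) (h1 : τ < 1) :
    ∑ P ∈ 𝒢, τ ^ sumAbove 𝒢 1 P * (∫ x in P, f x ∂μ) / ⨍ x in S, f x ∂μ ≤
      τ / (1 - τ) * μ.real S := by
  have := sum_setIntegral_mul_le (g := fun P _ => τ ^ sumAbove 𝒢 1 P) h.measurableSet hsub hf hfS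
    (fun P hP => (hfS.mono_set (hsub P hP)).const_mul _)
    (h.laminar.sum_rpow_sumAbove_one_le h0 h1)
  rw [← Finset.sum_div, div_le_iff₀ hpos, mul_assoc, ← smul_eq_mul (μ.real S),
    measure_smul_setAverage f hfin]
  simpa only [integral_const_mul] using this

theorem sum_measureReal_mul_rpow_neg_le (h : IsCarlesonFamily μ Λ (𝒢 : Set (Set X))) (hΛ : 0 < Λ)
    {S : Set X} (hS : S ∈ 𝒢) (hsub : ∀ P ∈ 𝒢, P ⊆ S) :
    ∑ P ∈ 𝒢, μ.real P * (2 * Λ / (1 + 2 * Λ)) ^ (-sumAbove 𝒢 1 P) ≤ 2 * Λ * μ.real S :=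
  calc ∑ P ∈ 𝒢, μ.real P * (2 * Λ / (1 + 2 * Λ)) ^ (-sumAbove 𝒢 1 P)
      ≤ 2 * ∑ P ∈ 𝒢, μ.real P := h.isForest.sum_mul_rpow_neg_sumAbove_le hΛ
        (fun _ _ => measureReal_nonneg) (h.packing 𝒢 subset_rfl)
    _ = 2 * sumBelow 𝒢 μ.real S := by rw [sumBelow_of_forall_le hsub]
    _ ≤ 2 * Λ * μ.real S := by
        rw [mul_assoc]
        exact mul_le_mul_of_nonneg_left (h.packing 𝒢 subset_rfl S hS) zero_le_two

end IsCarlesonFamily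

end Carleson

section Kolmogorov

theorem rpow_mul_rpow_le_of_add_lt_one {α β x y t : ℝ} (hα : 0 ≤ α) (hβ : 0 ≤ β)
    (hαβ : α + β < 1) (hx : 0 ≤ x) (hy : 0 ≤ y) (ht0 : 0 < t) (ht1 : t ≤ 1) :
    x ^ α * y ^ β ≤ α * (t ^ (1 - α - β) * x) + β * (t ^ (1 - α - β) * y) + t⁻¹ := by
  set γ := 1 - α - β with hγ
  have hcancel : t ^ (γ * α) * t ^ (γ * β) * t ^ (-(α + β) * γ) = 1 := by
    rw [← Real.rpow_add ht0, ← Real.rpow_add ht0, ← Real.rpow_zero t]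
    ring_nf
  have hlast : γ * t ^ (-(α + β)) ≤ 1 * t ^ (-1 : ℝ) :=
    mul_le_mul (by linarith) (Real.rpow_le_rpow_of_exponent_ge ht0 ht1 (by linarith))
      (by positivity) zero_le_one
  calc x ^ α * y ^ β = (t ^ γ * x) ^ α * (t ^ γ * y) ^ β * (t ^ (-(α + β))) ^ γ := by
        rw [Real.mul_rpow (by positivity) hx, Real.mul_rpow (by positivity) hy,
          ← Real.rpow_mul ht0.le, ← Real.rpow_mul ht0.le, ← Real.rpow_mul ht0.le]
        linear_combination (-(x ^ α * y ^ β)) * hcancel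
    _ ≤ α * (t ^ γ * x) + β * (t ^ γ * y) + γ * t ^ (-(α + β)) :=
        Real.geom_mean_le_arith_mean3_weighted hα hβ (by linarith) (by positivity) (by positivity)
          (by positivity) (by rw [hγ]; ring)
    _ ≤ _ := by rw [one_mul, Real.rpow_neg_one] at hlast; gcongr

variable {X : Type*} [MeasurableSpace X] {μ : Measure X} {Λ : ℝ} {𝒢 : Finset (Set X)}

/-- The constant in the bilinear Kolmogorov inequality over a family with packing constant `Λ`,
where `γ` is the gap between `1` and the sum of the two exponents. -/
def kolmogorovConst (Λ γ : ℝ) : ℝ :=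
  (2 * Λ / (1 + 2 * Λ)) ^ γ / (1 - (2 * Λ / (1 + 2 * Λ)) ^ γ) + 2 * Λ

theorem kolmogorovConst_pos {γ : ℝ} (hΛ : 0 < Λ) (hγ : 0 < γ) : 0 < kolmogorovConst Λ γ := by
  have hτ : 2 * Λ / (1 + 2 * Λ) < 1 := (div_lt_one (by positivity)).2 (by linarith)
  have := sub_pos.2 (Real.rpow_lt_one (by positivity) hτ hγ)
  unfold kolmogorovConst
  positivity

theorem setAverage_rpow_mul_le {α β : ℝ} (hα : 0 ≤ α) (hβ : 0 ≤ β) (hαβ : α + β < 1) {P : Set X}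
    (hP : μ P ≠ ∞) {f g : X → ℝ} (hf : ∀ x, 0 ≤ f x) (hg : ∀ x, 0 ≤ g x) {u v τ d : ℝ} (hu : 0 < u)
    (hv : 0 < v) (hτ0 : 0 < τ) (hτ1 : τ ≤ 1) (hd : 0 ≤ d) :
    (⨍ x in P, f x ∂μ) ^ α * (⨍ x in P, g x ∂μ) ^ β * μ.real P ≤
      u ^ α * v ^ β * (α * ((τ ^ (1 - α - β)) ^ d * (∫ x in P, f x ∂μ) / u) +
        β * ((τ ^ (1 - α - β)) ^ d * (∫ x in P, g x ∂μ) / v) + μ.real P * τ ^ (-d)) := by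
  have hf0 : 0 ≤ ⨍ x in P, f x ∂μ := integral_nonneg hf
  have hg0 : 0 ≤ ⨍ x in P, g x ∂μ := integral_nonneg hg
  have hamgm := rpow_mul_rpow_le_of_add_lt_one hα hβ hαβ (div_nonneg hf0 hu.le)
    (div_nonneg hg0 hv.le) (t := τ ^ d) (by positivity) (Real.rpow_le_one hτ0.le hτ1 hd)
  rw [← Real.rpow_mul hτ0.le, mul_comm d, Real.rpow_mul hτ0.le, ← Real.rpow_neg hτ0.le,
    Real.div_rpow hf0 hu.le, Real.div_rpow hg0 hv.le, div_mul_div_comm,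
    div_le_iff₀' (by positivity)] at hamgm
  rw [← measure_smul_setAverage f hP, ← measure_smul_setAverage g hP, smul_eq_mul, smul_eq_mul]
  refine (mul_le_mul_of_nonneg_right hamgm measureReal_nonneg).trans_eq ?_
  ring

theorem IsCarlesonFamily.sum_setAverage_rpow_mul_le
    (h : IsCarlesonFamily μ Λ (𝒢 : Set (Set X))) (hΛ : 0 < Λ) {S : Set X} (hS : S ∈ 𝒢)
    (hsub : ∀ P ∈ 𝒢, P ⊆ S) {α β : ℝ} (hα : 0 ≤ α) (hβ : 0 ≤ β) (hαβ : α + β < 1) {f g : X → ℝ}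
    (hf : ∀ x, 0 ≤ f x) (hg : ∀ x, 0 ≤ g x) (hfS : IntegrableOn f S μ) (hgS : IntegrableOn g S μ)
    (hfpos : 0 < ⨍ x in S, f x ∂μ) (hgpos : 0 < ⨍ x in S, g x ∂μ) :
    ∑ P ∈ 𝒢, (⨍ x in P, f x ∂μ) ^ α * (⨍ x in P, g x ∂μ) ^ β * μ.real P ≤
      kolmogorovConst Λ (1 - α - β) *
        ((⨍ x in S, f x ∂μ) ^ α * (⨍ x in S, g x ∂μ) ^ β * μ.real S) := by
  set γ := 1 - α - β with _
  set τ := 2 * Λ / (1 + 2 * Λ)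
  set u := ⨍ x in S, f x ∂μ
  set v := ⨍ x in S, g x ∂μ
  set d : Set X → ℝ := sumAbove 𝒢 1
  have hτ0 : 0 < τ := by positivity
  have hτ1 : τ < 1 := (div_lt_one (by positivity)).2 (by linarith)
  have hτγ0 : 0 < τ ^ γ := by positivity
  have hτγ1 : τ ^ γ < 1 := Real.rpow_lt_one hτ0.le hτ1 (by linarith)
  have : 0 ≤ τ ^ γ / (1 - τ ^ γ) := div_nonneg hτγ0.le (sub_nonneg.2 hτγ1.le)
  have hd : ∀ P ∈ 𝒢, 0 ≤ d P := fun P hP =>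
    zero_le_one.trans (le_sumAbove (f := 1) (fun _ _ => zero_le_one) hP)
  calc ∑ P ∈ 𝒢, (⨍ x in P, f x ∂μ) ^ α * (⨍ x in P, g x ∂μ) ^ β * μ.real P
      ≤ ∑ P ∈ 𝒢, u ^ α * v ^ β * (α * ((τ ^ γ) ^ d P * (∫ x in P, f x ∂μ) / u) +
          β * ((τ ^ γ) ^ d P * (∫ x in P, g x ∂μ) / v) + μ.real P * τ ^ (-d P)) :=
        Finset.sum_le_sum fun P hP => setAverage_rpow_mul_le hα hβ hαβ (h.measure_ne_top P hP)
          hf hg hfpos hgpos hτ0 hτ1.le (hd P hP)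
    _ = u ^ α * v ^ β * (α * (∑ P ∈ 𝒢, (τ ^ γ) ^ d P * (∫ x in P, f x ∂μ) / u) +
          β * (∑ P ∈ 𝒢, (τ ^ γ) ^ d P * (∫ x in P, g x ∂μ) / v) +
          ∑ P ∈ 𝒢, μ.real P * τ ^ (-d P)) := by
        simp only [← Finset.mul_sum, Finset.sum_add_distrib]
    _ ≤ u ^ α * v ^ β * (α * (τ ^ γ / (1 - τ ^ γ) * μ.real S) +
          β * (τ ^ γ / (1 - τ ^ γ) * μ.real S) + 2 * Λ * μ.real S) := by
        have hSfin := h.measure_ne_top S hS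
        gcongr
        · exact h.sum_rpow_mul_setIntegral_div_setAverage_le hSfin hsub hf hfS hfpos hτγ0 hτγ1
        · exact h.sum_rpow_mul_setIntegral_div_setAverage_le hSfin hsub hg hgS hgpos hτγ0 hτγ1
        · exact h.sum_measureReal_mul_rpow_neg_le hΛ hS hsub
    _ = u ^ α * v ^ β * ((α + β) * (τ ^ γ / (1 - τ ^ γ)) + 2 * Λ) * μ.real S := by ring
    _ ≤ u ^ α * v ^ β * (1 * (τ ^ γ / (1 - τ ^ γ)) + 2 * Λ) * μ.real S := by gcongr
    _ = _ := by rw [kolmogorovConst]; ring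

end Kolmogorov

section GeometricMaximal

variable {X : Type*} [MeasurableSpace X] {μ : Measure X} {Λ : ℝ} {𝒢 : Finset (Set X)} {S : Set X}
  {w : X → ℝ}

theorem exp_setAverage_le {Q : Set X} (h0 : μ Q ≠ 0) (ht : μ Q ≠ ∞) {f : X → ℝ}
    (hf : IntegrableOn f Q μ) (hexp : IntegrableOn (fun x => Real.exp (f x)) Q μ) :
    Real.exp (⨍ x in Q, f x ∂μ) ≤ ⨍ x in Q, Real.exp (f x) ∂μ :=
  convexOn_exp.map_set_average_le Real.continuous_exp.continuousOn isClosed_univ h0 ht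
    (.of_forall fun _ => mem_univ _) hf hexp

theorem exp_setAverage_log_le {Q : Set X} (h0 : μ Q ≠ 0) (ht : μ Q ≠ ∞) (hw : ∀ x, 0 < w x)
    (hwQ : IntegrableOn w Q μ) (hlog : IntegrableOn (fun x => Real.log (w x)) Q μ) :
    Real.exp (⨍ x in Q, Real.log (w x) ∂μ) ≤ ⨍ x in Q, w x ∂μ := by
  simpa only [Real.exp_log (hw _)] using
    exp_setAverage_le h0 ht hlog (by simpa only [Real.exp_log (hw _)] using hwQ)

namespace IsCarlesonFamily

theorem integrableOn_indicator_one (h : IsCarlesonFamily μ Λ (𝒢 : Set (Set X))) {P Q : Set X}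
    (hP : P ∈ 𝒢) (hQ : μ Q ≠ ∞) : IntegrableOn (P.indicator (1 : X → ℝ)) Q μ :=
  IntegrableOn.indicator (integrableOn_const hQ (C := (1 : ℝ))) (h.measurableSet P hP)

theorem integrableOn_overlapBelow (h : IsCarlesonFamily μ Λ (𝒢 : Set (Set X))) {Q : Set X}
    (hQ : μ Q ≠ ∞) : IntegrableOn (overlapBelow 𝒢 Q) Q μ := by
  classical
  exact Integrable.congr (integrable_finsetSum (𝒢.filter (· ≤ Q)) fun P hP =>
    h.integrableOn_indicator_one (Finset.mem_filter.1 hP).1 hQ) (.of_forall fun x => rfl)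

theorem setIntegral_overlapBelow (h : IsCarlesonFamily μ Λ (𝒢 : Set (Set X))) {Q : Set X}
    (hQ : μ Q ≠ ∞) : ∫ x in Q, overlapBelow 𝒢 Q x ∂μ = sumBelow 𝒢 μ.real Q := by
  classical
  refine (integral_finsetSum (𝒢.filter (· ≤ Q)) fun P hP =>
    h.integrableOn_indicator_one (Finset.mem_filter.1 hP).1 hQ).trans
      (Finset.sum_congr rfl fun P hP => ?_)
  obtain ⟨hP, hPQ⟩ := Finset.mem_filter.1 hP
  rw [integral_indicator_one (h.measurableSet P hP),
    measureReal_restrict_apply (h.measurableSet P hP), inter_eq_left.2 hPQ]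

theorem integrableOn_rpow_overlapBelow_mul (h : IsCarlesonFamily μ Λ (𝒢 : Set (Set X)))
    {Q : Set X} (hQ : μ Q ≠ ∞) (hwQ : IntegrableOn w Q μ) :
    IntegrableOn (fun x => (1 / 2 : ℝ) ^ overlapBelow 𝒢 Q x * w x) Q μ := by
  refine hwQ.bdd_mul (c := 1) ?_ (.of_forall fun x => ?_)
  · exact ((h.integrableOn_overlapBelow hQ).aemeasurable.const_pow _).aestronglyMeasurable
  · rw [Real.norm_of_nonneg (by positivity)]
    exact Real.rpow_le_one (by norm_num) (by norm_num) (overlapBelow_nonneg 𝒢 Q x)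

theorem exp_setAverage_log_le_mul (h : IsCarlesonFamily μ Λ (𝒢 : Set (Set X)))
    (hw : ∀ x, 0 < w x) {Q : Set X} (hQ : Q ∈ 𝒢) (hwQ : IntegrableOn w Q μ)
    (hlog : IntegrableOn (fun x => Real.log (w x)) Q μ) :
    Real.exp (⨍ x in Q, Real.log (w x) ∂μ) ≤
      2 ^ Λ * ⨍ x in Q, (1 / 2 : ℝ) ^ overlapBelow 𝒢 Q x * w x ∂μ := by
  have hfin := h.measure_ne_top Q hQ
  have hD := h.integrableOn_overlapBelow hfin
  have hexp : ∀ x, Real.exp (Real.log (w x) - Real.log 2 * overlapBelow 𝒢 Q x) =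
      (1 / 2 : ℝ) ^ overlapBelow 𝒢 Q x * w x := fun x => by
    rw [sub_eq_neg_add, Real.exp_add, Real.exp_log (hw x), Real.rpow_def_of_pos one_half_pos,
      one_div, Real.log_inv, neg_mul]
  have hDavg : ⨍ x in Q, overlapBelow 𝒢 Q x ∂μ ≤ Λ := by
    rw [setAverage_eq, h.setIntegral_overlapBelow hfin, smul_eq_mul,
      inv_mul_le_iff₀ (h.measureReal_pos hQ), mul_comm]
    exact h.packing 𝒢 subset_rfl Q hQ
  have hjensen := exp_setAverage_le
    (f := fun x => Real.log (w x) - Real.log 2 * overlapBelow 𝒢 Q x) (h.measure_ne_zero Q hQ) hfin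
    (hlog.sub (hD.const_mul (Real.log 2)))
    ((h.integrableOn_rpow_overlapBelow_mul hfin hwQ).congr (.of_forall fun x => (hexp x).symm))
  have hsplit : ⨍ x in Q, Real.log (w x) ∂μ =
      ⨍ x in Q, (Real.log (w x) - Real.log 2 * overlapBelow 𝒢 Q x) ∂μ +
        Real.log 2 * ⨍ x in Q, overlapBelow 𝒢 Q x ∂μ := by
    simp only [setAverage_eq, smul_eq_mul, integral_sub hlog (hD.const_mul _), integral_const_mul]
    ring
  rw [hsplit, Real.exp_add, mul_comm, Real.rpow_def_of_pos two_pos]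
  simp only [hexp] at hjensen
  gcongr

theorem sum_exp_setAverage_log_mul_le (h : IsCarlesonFamily μ Λ (𝒢 : Set (Set X)))
    (hsub : ∀ P ∈ 𝒢, P ⊆ S) (hw : ∀ x, 0 < w x) (hwS : IntegrableOn w S μ)
    (hlog : IntegrableOn (fun x => Real.log (w x)) S μ) :
    ∑ P ∈ 𝒢, Real.exp (⨍ x in P, Real.log (w x) ∂μ) * μ.real P ≤ 2 ^ Λ * ∫ x in S, w x ∂μ := by
  calc ∑ P ∈ 𝒢, Real.exp (⨍ x in P, Real.log (w x) ∂μ) * μ.real P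
      ≤ ∑ P ∈ 𝒢, 2 ^ Λ *
          ∫ x in P, (1 / 2 : ℝ) ^ overlapBelow 𝒢 P x * w x ∂μ := by
        refine Finset.sum_le_sum fun P hP => ?_
        rw [← measure_smul_setAverage _ (h.measure_ne_top P hP), smul_eq_mul, mul_left_comm,
          mul_comm (μ.real P)]
        exact mul_le_mul_of_nonneg_right (h.exp_setAverage_log_le_mul hw hP
          (hwS.mono_set (hsub P hP)) (hlog.mono_set (hsub P hP))) measureReal_nonneg
    _ = 2 ^ Λ * ∑ P ∈ 𝒢,
          ∫ x in P, (1 / 2 : ℝ) ^ overlapBelow 𝒢 P x * w x ∂μ := by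
        rw [Finset.mul_sum]
    _ ≤ 2 ^ Λ * ((1 / 2 : ℝ) / (1 - 1 / 2) * ∫ x in S, w x ∂μ) := by
        gcongr
        exact sum_setIntegral_mul_le
          (g := fun P x => (1 / 2 : ℝ) ^ overlapBelow 𝒢 P x)
          h.measurableSet hsub (fun x => (hw x).le) hwS
          (fun P hP => h.integrableOn_rpow_overlapBelow_mul (h.measure_ne_top P hP)
            (hwS.mono_set (hsub P hP)))
          (h.laminar.sum_rpow_overlapBelow_le (by norm_num) (by norm_num))
    _ = 2 ^ Λ * ∫ x in S, w x ∂μ := by norm_num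

end IsCarlesonFamily

end GeometricMaximal

section FrozenFamilies

variable {X : Type*} [MeasurableSpace X] {μ : Measure X} {p q Λ κ : ℝ} {w σ : X → ℝ} {Q : Set X}
  {𝒢 : Finset (Set X)}

/-- The `A_p` quantity of a pair of weights on `Q`; for `σ = w ^ (1 - p')` it is `A_p(w, Q)`. -/
def jointAp (μ : Measure X) (p : ℝ) (w σ : X → ℝ) (Q : Set X) : ℝ :=
  (⨍ x in Q, w x ∂μ) * (⨍ x in Q, σ x ∂μ) ^ (p - 1)

/-- The exponential `A_∞` quantity of a weight on `Q`. -/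
def expAinfty (μ : Measure X) (w : X → ℝ) (Q : Set X) : ℝ :=
  (⨍ x in Q, w x ∂μ) * Real.exp (-⨍ x in Q, Real.log (w x) ∂μ)

theorem setAverage_nonneg {f : X → ℝ} (hf : ∀ x, 0 ≤ f x) : 0 ≤ ⨍ x in Q, f x ∂μ :=
  integral_nonneg hf

theorem setAverage_pos_of_jointAp_pos (hw : ∀ x, 0 ≤ w x) (h : 0 < jointAp μ p w σ Q) :
    0 < ⨍ x in Q, w x ∂μ :=
  (setAverage_nonneg hw).lt_of_ne' (left_ne_zero_of_mul h.ne')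

theorem setAverage_dual_pos_of_jointAp_pos (hp : 1 < p) (hσ : ∀ x, 0 ≤ σ x)
    (h : 0 < jointAp μ p w σ Q) : 0 < ⨍ x in Q, σ x ∂μ :=
  (setAverage_nonneg hσ).lt_of_ne' fun h0 => right_ne_zero_of_mul h.ne' <| by
    rw [h0, Real.zero_rpow (sub_pos.2 hp).ne']

/-- The power of `A_p(w, Q)` that can be split off `⟨w⟩_Q ⟨σ⟩_Q` leaving nonnegative powers of
`⟨w⟩_Q` and `⟨σ⟩_Q` with total exponent below `1`. -/
def freezingExponent (p : ℝ) : ℝ := (max 1 (p - 1))⁻¹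

theorem freezingExponent_pos (p : ℝ) : 0 < freezingExponent p :=
  inv_pos.2 (lt_max_of_lt_left one_pos)

theorem freezingExponent_le_one (p : ℝ) : freezingExponent p ≤ 1 :=
  inv_le_one_of_one_le₀ (le_max_left _ _)

theorem freezingExponent_mul_le_one (p : ℝ) : freezingExponent p * (p - 1) ≤ 1 := by
  rw [freezingExponent, inv_mul_le_one₀ (lt_max_of_lt_left one_pos)]
  exact le_max_right _ _

theorem one_lt_freezingExponent_mul (hp : 1 < p) : 1 < freezingExponent p * p := by
  rw [freezingExponent, lt_inv_mul_iff₀ (lt_max_of_lt_left one_pos), mul_one]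
  exact max_lt hp (sub_one_lt p)

theorem mul_eq_mul_rpow_mul_rpow {a b : ℝ} (ha : 0 < a) (hb : 0 < b) (s t : ℝ) :
    a * b = (a * b ^ s) ^ t * (a ^ (1 - t) * b ^ (1 - t * s)) := by
  rw [Real.mul_rpow ha.le (by positivity), mul_mul_mul_comm, ← Real.rpow_mul hb.le,
    ← Real.rpow_add ha, ← Real.rpow_add hb, mul_comm s]
  simp only [add_sub_cancel, Real.rpow_one]

theorem setAverage_mul_setAverage_eq (hp : 1 < p) (hw : ∀ x, 0 ≤ w x) (hσ : ∀ x, 0 ≤ σ x)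
    (h : 0 < jointAp μ p w σ Q) (t : ℝ) :
    (⨍ x in Q, w x ∂μ) * (⨍ x in Q, σ x ∂μ) = jointAp μ p w σ Q ^ t *
      ((⨍ x in Q, w x ∂μ) ^ (1 - t) * (⨍ x in Q, σ x ∂μ) ^ (1 - t * (p - 1))) :=
  mul_eq_mul_rpow_mul_rpow (setAverage_pos_of_jointAp_pos hw h)
    (setAverage_dual_pos_of_jointAp_pos hp hσ h) _ _

/-- The Carleson constant of `Q ↦ ⟨w⟩_Q σ(Q)` over a family with packing constant `Λ` on which
`A_p(w, Q)` varies by at most the factor `κ`. -/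
def frozenCarlesonConst (κ Λ p : ℝ) : ℝ :=
  κ ^ freezingExponent p * kolmogorovConst Λ (freezingExponent p * p - 1)

theorem frozenCarlesonConst_pos (hκ : 0 < κ) (hΛ : 0 < Λ) (hp : 1 < p) :
    0 < frozenCarlesonConst κ Λ p :=
  mul_pos (Real.rpow_pos_of_pos hκ _)
    (kolmogorovConst_pos hΛ (sub_pos.2 (one_lt_freezingExponent_mul hp)))

theorem IsCarlesonFamily.sumBelow_setAverage_mul_setIntegral_le
    (h : IsCarlesonFamily μ Λ (𝒢 : Set (Set X))) (hΛ : 0 < Λ) (hp : 1 < p) (hκ : 0 ≤ κ)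
    (hw : ∀ x, 0 ≤ w x) (hσ : ∀ x, 0 ≤ σ x) (hpos : ∀ P ∈ 𝒢, 0 < jointAp μ p w σ P)
    (hfrozen : ∀ Q ∈ 𝒢, ∀ P ∈ 𝒢, jointAp μ p w σ P ≤ κ * jointAp μ p w σ Q)
    (hQ : Q ∈ 𝒢) (hwQ : IntegrableOn w Q μ) (hσQ : IntegrableOn σ Q μ) :
    sumBelow 𝒢 (fun P => (⨍ x in P, w x ∂μ) * ∫ x in P, σ x ∂μ) Q ≤
      frozenCarlesonConst κ Λ p * ((⨍ x in Q, w x ∂μ) * ∫ x in Q, σ x ∂μ) := by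
  classical
  set t := freezingExponent p with _
  set avg : (X → ℝ) → Set X → ℝ := fun f P => ⨍ x in P, f x ∂μ
  have hterm : ∀ P ∈ 𝒢, avg w P * ∫ x in P, σ x ∂μ =
      jointAp μ p w σ P ^ t * (avg w P ^ (1 - t) * avg σ P ^ (1 - t * (p - 1)) * μ.real P) :=
    fun P hP => by
      rw [← measure_smul_setAverage _ (h.measure_ne_top P hP), smul_eq_mul, mul_left_comm,
        setAverage_mul_setAverage_eq hp hw hσ (hpos P hP) t]
      ring
  have hkolmogorov := (h.mono (Finset.coe_subset.2 (𝒢.filter_subset (· ≤ Q)))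
    ).sum_setAverage_rpow_mul_le hΛ (Finset.mem_filter.2 ⟨hQ, le_rfl⟩)
      (fun P hP => (Finset.mem_filter.1 hP).2) (sub_nonneg.2 (freezingExponent_le_one p))
      (sub_nonneg.2 (freezingExponent_mul_le_one p))
      (by linarith [one_lt_freezingExponent_mul hp]) hw hσ hwQ hσQ
      (setAverage_pos_of_jointAp_pos hw (hpos Q hQ))
      (setAverage_dual_pos_of_jointAp_pos hp hσ (hpos Q hQ))
  have hAQ := hpos Q hQ
  calc sumBelow 𝒢 (fun P => avg w P * ∫ x in P, σ x ∂μ) Q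
      ≤ ∑ P ∈ 𝒢 with P ≤ Q, (κ * jointAp μ p w σ Q) ^ t *
          (avg w P ^ (1 - t) * avg σ P ^ (1 - t * (p - 1)) * μ.real P) := by
        refine Finset.sum_le_sum fun P hP => ?_
        have hP := (Finset.mem_filter.1 hP).1
        have hAP := hpos P hP
        rw [hterm P hP]
        have : 0 ≤ avg w P := setAverage_nonneg hw
        have : 0 ≤ avg σ P := setAverage_nonneg hσ
        have := (freezingExponent_pos p).le
        gcongr
        exact hfrozen Q hQ P hP
    _ ≤ (κ * jointAp μ p w σ Q) ^ t * (kolmogorovConst Λ (t * p - 1) *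
          (avg w Q ^ (1 - t) * avg σ Q ^ (1 - t * (p - 1)) * μ.real Q)) := by
        rw [← Finset.mul_sum, show t * p - 1 = 1 - (1 - t) - (1 - t * (p - 1)) by ring]
        gcongr
    _ = frozenCarlesonConst κ Λ p * (avg w Q * ∫ x in Q, σ x ∂μ) := by
        rw [hterm Q hQ, Real.mul_rpow hκ hAQ.le, frozenCarlesonConst]
        ring

theorem withDensity_ofReal_apply (hQ : MeasurableSet Q) (hσ : ∀ x, 0 ≤ σ x)
    (hσQ : IntegrableOn σ Q μ) :
    μ.withDensity (fun x => ENNReal.ofReal (σ x)) Q = ENNReal.ofReal (∫ x in Q, σ x ∂μ) := by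
  rw [withDensity_apply _ hQ, ofReal_integral_eq_lintegral_ofReal hσQ (.of_forall hσ)]

theorem IsCarlesonFamily.lintegral_rpow_sum_indicator_setAverage_le
    (h : IsCarlesonFamily μ Λ (𝒢 : Set (Set X))) (hΛ : 0 < Λ) (hp : 1 < p) (hq : 1 < q)
    (hκ : 0 < κ) (hw : ∀ x, 0 ≤ w x) (hσ : ∀ x, 0 ≤ σ x)
    (hwint : ∀ P ∈ 𝒢, IntegrableOn w P μ) (hσint : ∀ P ∈ 𝒢, IntegrableOn σ P μ)
    (hpos : ∀ P ∈ 𝒢, 0 < jointAp μ p w σ P)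
    (hfrozen : ∀ Q ∈ 𝒢, ∀ P ∈ 𝒢, jointAp μ p w σ P ≤ κ * jointAp μ p w σ Q) :
    ∫⁻ x, ENNReal.ofReal ((∑ Q ∈ 𝒢, Q.indicator (fun _ => ⨍ y in Q, w y ∂μ) x) ^ q)
        ∂(μ.withDensity fun x => ENNReal.ofReal (σ x)) ≤
      ENNReal.ofReal (quasiOrthogonalityConst (frozenCarlesonConst κ Λ p) q *
        ∑ Q ∈ 𝒢, (⨍ x in Q, w x ∂μ) ^ q * ∫ x in Q, σ x ∂μ) := by
  set ν := μ.withDensity fun x => ENNReal.ofReal (σ x)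
  have hν : ∀ Q ∈ 𝒢, ν Q = ENNReal.ofReal (∫ x in Q, σ x ∂μ) := fun Q hQ =>
    withDensity_ofReal_apply (h.measurableSet Q hQ) hσ (hσint Q hQ)
  have hνreal : ∀ Q ∈ 𝒢, ν.real Q = ∫ x in Q, σ x ∂μ := fun Q hQ => by
    rw [measureReal_def, hν Q hQ, ENNReal.toReal_ofReal (integral_nonneg hσ)]
  have hcarleson : ∀ Q ∈ 𝒢, sumBelow 𝒢 (fun P => (⨍ x in P, w x ∂μ) * ν.real P) Q ≤
      frozenCarlesonConst κ Λ p * ((⨍ x in Q, w x ∂μ) * ν.real Q) := fun Q hQ => by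
    rw [hνreal Q hQ]
    refine (sumBelow_congr (fun P hP => by rw [hνreal P hP]) Q).trans_le
      (h.sumBelow_setAverage_mul_setIntegral_le hΛ hp hκ.le hw hσ hpos hfrozen hQ (hwint Q hQ)
        (hσint Q hQ))
  refine (h.laminar.lintegral_rpow_sum_indicator_le (fun Q hQ => h.nonempty hQ) h.measurableSet
    (fun Q hQ => (hν Q hQ).trans_ne ENNReal.ofReal_ne_top) (fun Q _ => setAverage_nonneg hw)
    (frozenCarlesonConst_pos hκ hΛ hp) hq hcarleson).trans_eq ?_
  congr 2
  exact Finset.sum_congr rfl fun Q hQ => by rw [hνreal Q hQ]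

end FrozenFamilies

section FiniteTesting

theorem lintegral_rpow_sum_le_of_fiberwise {X ι : Type*} [MeasurableSpace X] {ν : Measure X}
    {s : Finset ι} {N : ℕ} {ℓ : ι → ℕ} (hℓ : ∀ i ∈ s, ℓ i ∈ Finset.range N) {f : ι → X → ℝ}
    (hf : ∀ i ∈ s, Measurable (f i)) (hf0 : ∀ i ∈ s, ∀ x, 0 ≤ f i x) {b : ι → ℝ}
    (hb : ∀ i ∈ s, 0 ≤ b i) {q : ℝ} (hq : 1 ≤ q)
    (hfib : ∀ k, ∫⁻ x, ENNReal.ofReal ((∑ i ∈ s with ℓ i = k, f i x) ^ q) ∂ν ≤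
      ENNReal.ofReal (∑ i ∈ s with ℓ i = k, b i)) :
    ∫⁻ x, ENNReal.ofReal ((∑ i ∈ s, f i x) ^ q) ∂ν ≤
      ENNReal.ofReal ((N : ℝ) ^ (q - 1) * ∑ i ∈ s, b i) := by
  set F : ℕ → X → ℝ := fun k x => ∑ i ∈ s with ℓ i = k, f i x
  have hF0 : ∀ k x, 0 ≤ F k x := fun k x =>
    Finset.sum_nonneg fun i hi => hf0 i (Finset.mem_filter.1 hi).1 x
  have hFmeas : ∀ k ∈ Finset.range N, Measurable fun x => ENNReal.ofReal (F k x ^ q) := fun k _ =>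
    ((Finset.measurable_fun_sum _ fun i hi =>
      hf i (Finset.mem_filter.1 hi).1).pow_const q).ennreal_ofReal
  have hpointwise : ∀ x, ENNReal.ofReal ((∑ i ∈ s, f i x) ^ q) ≤
      ENNReal.ofReal ((N : ℝ) ^ (q - 1)) * ∑ k ∈ Finset.range N, ENNReal.ofReal (F k x ^ q) :=
    fun x => by
      rw [← ENNReal.ofReal_sum_of_nonneg fun k _ => Real.rpow_nonneg (hF0 k x) q,
        ← ENNReal.ofReal_mul (by positivity), ← Finset.sum_fiberwise_of_maps_to hℓ]
      simpa only [Finset.card_range] using ENNReal.ofReal_le_ofReal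
        (Real.rpow_sum_le_const_mul_sum_rpow_of_nonneg (Finset.range N) hq fun k _ => hF0 k x)
  calc ∫⁻ x, ENNReal.ofReal ((∑ i ∈ s, f i x) ^ q) ∂ν
      ≤ ENNReal.ofReal ((N : ℝ) ^ (q - 1)) *
          ∑ k ∈ Finset.range N, ∫⁻ x, ENNReal.ofReal (F k x ^ q) ∂ν := by
        rw [← lintegral_finsetSum _ hFmeas,
          ← lintegral_const_mul _ (Finset.measurable_fun_sum _ hFmeas)]
        exact lintegral_mono hpointwise
    _ ≤ ENNReal.ofReal ((N : ℝ) ^ (q - 1)) *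
          ∑ k ∈ Finset.range N, ENNReal.ofReal (∑ i ∈ s with ℓ i = k, b i) := by
        gcongr with k
        exact hfib k
    _ = ENNReal.ofReal ((N : ℝ) ^ (q - 1) * ∑ i ∈ s, b i) := by
        rw [← ENNReal.ofReal_sum_of_nonneg fun k _ =>
          Finset.sum_nonneg fun i hi => hb i (Finset.mem_filter.1 hi).1,
          ← ENNReal.ofReal_mul (by positivity), Finset.sum_fiberwise_of_maps_to hℓ]

theorem le_exp_one_mul_of_floor_log_eq {x y : ℝ} (hx : 0 < x) (hy : 1 ≤ y)
    (h : ⌊Real.log x⌋₊ = ⌊Real.log y⌋₊) : x ≤ Real.exp 1 * y := by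
  have hy0 : 0 < y := one_pos.trans_le hy
  have hxlt := Nat.lt_floor_add_one (Real.log x)
  have hyle := Nat.floor_le (Real.log_nonneg hy)
  rw [h] at hxlt
  rw [← Real.log_le_log_iff hx (by positivity), Real.log_mul (Real.exp_ne_zero 1) hy0.ne',
    Real.log_exp]
  linarith

variable {X : Type*} [MeasurableSpace X] {μ : Measure X} {p q Λ A M : ℝ} {w σ : X → ℝ}
  {Q S : Set X} {𝒢 : Finset (Set X)}

theorem jointAp_nonneg (hw : ∀ x, 0 ≤ w x) (hσ : ∀ x, 0 ≤ σ x) : 0 ≤ jointAp μ p w σ Q :=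
  mul_nonneg (setAverage_nonneg hw) (Real.rpow_nonneg (setAverage_nonneg hσ) _)

theorem expAinfty_nonneg (hw : ∀ x, 0 ≤ w x) : 0 ≤ expAinfty μ w Q :=
  mul_nonneg (setAverage_nonneg hw) (Real.exp_nonneg _)

theorem rpow_jointAp_mul_rpow_expAinfty_rpow_mul_exp (hpq : p.HolderConjugate q)
    (hw : ∀ x, 0 ≤ w x) (hσ : ∀ x, 0 ≤ σ x) :
    (jointAp μ p w σ Q ^ (1 / p) * expAinfty μ w Q ^ (1 / q)) ^ q *
        Real.exp (⨍ x in Q, Real.log (w x) ∂μ) =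
      (⨍ x in Q, w x ∂μ) ^ q * ⨍ x in Q, σ x ∂μ := by
  have ha : 0 ≤ ⨍ x in Q, w x ∂μ := setAverage_nonneg hw
  have hb : 0 ≤ ⨍ x in Q, σ x ∂μ := setAverage_nonneg hσ
  have hjoint : 0 ≤ jointAp μ p w σ Q := jointAp_nonneg hw hσ
  have hexp : 0 ≤ expAinfty μ w Q := expAinfty_nonneg hw
  rw [Real.mul_rpow (by positivity) (by positivity), ← Real.rpow_mul hjoint,
    ← Real.rpow_mul hexp, one_div_mul_cancel hpq.symm.ne_zero, Real.rpow_one, one_div_mul_eq_div,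
    hpq.symm.div_conj_eq_sub_one, jointAp, expAinfty, Real.mul_rpow ha (by positivity),
    ← Real.rpow_mul hb, show (p - 1) * (q - 1) = 1 by linarith [hpq.sub_one_mul_conj],
    Real.rpow_one, mul_assoc, mul_assoc (⨍ x in Q, w x ∂μ), ← Real.exp_add, neg_add_cancel,
    Real.exp_zero, mul_one, mul_right_comm,
    ← Real.rpow_add_one' ha (by rw [sub_add_cancel]; exact hpq.symm.ne_zero), sub_add_cancel]

theorem IsCarlesonFamily.sum_setAverage_rpow_mul_setIntegral_le
    (h : IsCarlesonFamily μ Λ (𝒢 : Set (Set X))) (hpq : p.HolderConjugate q)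
    (hsub : ∀ P ∈ 𝒢, P ⊆ S) (hw : ∀ x, 0 < w x) (hσ : ∀ x, 0 ≤ σ x) (hwS : IntegrableOn w S μ)
    (hlog : IntegrableOn (fun x => Real.log (w x)) S μ)
    (hM0 : 0 ≤ M) (hM : ∀ Q ∈ 𝒢, jointAp μ p w σ Q ^ (1 / p) * expAinfty μ w Q ^ (1 / q) ≤ M) :
    ∑ Q ∈ 𝒢, (⨍ x in Q, w x ∂μ) ^ q * ∫ x in Q, σ x ∂μ ≤ M ^ q * (2 ^ Λ * ∫ x in S, w x ∂μ) := by
  calc ∑ Q ∈ 𝒢, (⨍ x in Q, w x ∂μ) ^ q * ∫ x in Q, σ x ∂μ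
      ≤ ∑ Q ∈ 𝒢, M ^ q * (Real.exp (⨍ x in Q, Real.log (w x) ∂μ) * μ.real Q) := by
        refine Finset.sum_le_sum fun Q hQ => ?_
        rw [← measure_smul_setAverage _ (h.measure_ne_top Q hQ), smul_eq_mul, mul_left_comm,
          mul_comm, ← rpow_jointAp_mul_rpow_expAinfty_rpow_mul_exp hpq (fun x => (hw x).le) hσ,
          mul_assoc]
        have : 0 ≤ jointAp μ p w σ Q := jointAp_nonneg (fun x => (hw x).le) hσ
        have : 0 ≤ expAinfty μ w Q := expAinfty_nonneg fun x => (hw x).le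
        have := hpq.symm.nonneg
        gcongr
        exact hM Q hQ
    _ ≤ M ^ q * (2 ^ Λ * ∫ x in S, w x ∂μ) := by
        rw [← Finset.mul_sum]
        exact mul_le_mul_of_nonneg_left (h.sum_exp_setAverage_log_mul_le hsub hw hwS hlog)
          (Real.rpow_nonneg hM0 q)

theorem IsCarlesonFamily.lintegral_rpow_sum_indicator_setAverage_le_floor_log
    (h : IsCarlesonFamily μ Λ (𝒢 : Set (Set X))) (hΛ : 0 < Λ) (hp : 1 < p) (hq : 1 < q)
    (hw : ∀ x, 0 ≤ w x) (hσ : ∀ x, 0 ≤ σ x) (hwint : ∀ P ∈ 𝒢, IntegrableOn w P μ)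
    (hσint : ∀ P ∈ 𝒢, IntegrableOn σ P μ) (hA : ∀ Q ∈ 𝒢, jointAp μ p w σ Q ∈ Icc 1 A) :
    ∫⁻ x, ENNReal.ofReal ((∑ Q ∈ 𝒢, Q.indicator (fun _ => ⨍ y in Q, w y ∂μ) x) ^ q)
        ∂(μ.withDensity fun x => ENNReal.ofReal (σ x)) ≤
      ENNReal.ofReal ((⌊Real.log A⌋₊ + 1 : ℕ) ^ (q - 1) *
        (quasiOrthogonalityConst (frozenCarlesonConst (Real.exp 1) Λ p) q *
          ∑ Q ∈ 𝒢, (⨍ x in Q, w x ∂μ) ^ q * ∫ x in Q, σ x ∂μ)) := by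
  set B := quasiOrthogonalityConst (frozenCarlesonConst (Real.exp 1) Λ p) q
  have hB : 0 < B :=
    quasiOrthogonalityConst_pos (frozenCarlesonConst_pos (Real.exp_pos 1) hΛ hp) hq
  set ℓ : Set X → ℕ := fun Q => ⌊Real.log (jointAp μ p w σ Q)⌋₊
  have hpos : ∀ Q ∈ 𝒢, 0 < jointAp μ p w σ Q := fun Q hQ => one_pos.trans_le (hA Q hQ).1
  have hlevel : ∀ Q ∈ 𝒢, ℓ Q ∈ Finset.range (⌊Real.log A⌋₊ + 1) := fun Q hQ =>
    Finset.mem_range_succ_iff.2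
      (Nat.floor_le_floor (Real.log_le_log (hpos Q hQ) (hA Q hQ).2))
  rw [Finset.mul_sum]
  refine lintegral_rpow_sum_le_of_fiberwise hlevel
    (fun Q hQ => measurable_const.indicator (h.measurableSet Q hQ))
    (fun Q _ => indicator_nonneg fun _ _ => setAverage_nonneg hw)
    (fun Q _ => mul_nonneg hB.le (mul_nonneg (Real.rpow_nonneg (setAverage_nonneg hw) q)
      (integral_nonneg hσ))) hq.le fun k => ?_
  rw [← Finset.mul_sum]
  have hmem : ∀ {Q}, Q ∈ 𝒢.filter (ℓ · = k) → Q ∈ 𝒢 := fun hQ => (Finset.mem_filter.1 hQ).1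
  exact (h.mono (Finset.coe_subset.2 (𝒢.filter_subset _))
    ).lintegral_rpow_sum_indicator_setAverage_le hΛ hp hq (Real.exp_pos 1) hw hσ
      (fun P hP => hwint P (hmem hP)) (fun P hP => hσint P (hmem hP))
      (fun P hP => hpos P (hmem hP)) fun Q hQ P hP =>
        le_exp_one_mul_of_floor_log_eq (hpos P (hmem hP)) (hA Q (hmem hQ)).1
          ((Finset.mem_filter.1 hP).2.trans (Finset.mem_filter.1 hQ).2.symm)

/-- The constant in the `p'`-th power of the testing inequality over a family with packing
constant `Λ`, where `q = p'`. -/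
def testingConst (Λ p q : ℝ) : ℝ :=
  quasiOrthogonalityConst (frozenCarlesonConst (Real.exp 1) Λ p) q * 2 ^ Λ

theorem testingConst_pos (hΛ : 0 < Λ) (hp : 1 < p) (hq : 1 < q) : 0 < testingConst Λ p q :=
  mul_pos (quasiOrthogonalityConst_pos (frozenCarlesonConst_pos (Real.exp_pos 1) hΛ hp) hq)
    (Real.rpow_pos_of_pos two_pos Λ)

theorem IsCarlesonFamily.lintegral_rpow_sum_indicator_setAverage_le_log
    (h : IsCarlesonFamily μ Λ (𝒢 : Set (Set X))) (hΛ : 0 < Λ) (hpq : p.HolderConjugate q)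
    (hsub : ∀ P ∈ 𝒢, P ⊆ S) (hw : ∀ x, 0 < w x) (hσ : ∀ x, 0 ≤ σ x) (hwS : IntegrableOn w S μ)
    (hσS : IntegrableOn σ S μ) (hlog : IntegrableOn (fun x => Real.log (w x)) S μ) (hA1 : 1 ≤ A)
    (hA : ∀ Q ∈ 𝒢, jointAp μ p w σ Q ∈ Icc 1 A) (hM0 : 0 ≤ M)
    (hM : ∀ Q ∈ 𝒢, jointAp μ p w σ Q ^ (1 / p) * expAinfty μ w Q ^ (1 / q) ≤ M) :
    ∫⁻ x, ENNReal.ofReal ((∑ Q ∈ 𝒢, Q.indicator (fun _ => ⨍ y in Q, w y ∂μ) x) ^ q)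
        ∂(μ.withDensity fun x => ENNReal.ofReal (σ x)) ≤
      ENNReal.ofReal (testingConst Λ p q * (1 + Real.log A) ^ (q - 1) * M ^ q *
        ∫ x in S, w x ∂μ) := by
  have hw0 : ∀ x, 0 ≤ w x := fun x => (hw x).le
  refine (h.lintegral_rpow_sum_indicator_setAverage_le_floor_log hΛ hpq.lt hpq.symm.lt hw0 hσ
    (fun P hP => hwS.mono_set (hsub P hP)) (fun P hP => hσS.mono_set (hsub P hP)) hA).trans
    (ENNReal.ofReal_le_ofReal ?_)
  set B := quasiOrthogonalityConst (frozenCarlesonConst (Real.exp 1) Λ p) q with hB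
  have hB0 : 0 < B :=
    quasiOrthogonalityConst_pos (frozenCarlesonConst_pos (Real.exp_pos 1) hΛ hpq.lt) hpq.symm.lt
  have hlevels : ((⌊Real.log A⌋₊ + 1 : ℕ) : ℝ) ≤ 1 + Real.log A := by
    rw [Nat.cast_add_one, add_comm]
    exact add_le_add_right (Nat.floor_le (Real.log_nonneg hA1)) 1
  have := hpq.symm.sub_one_pos.le
  have := Real.log_nonneg hA1
  calc (⌊Real.log A⌋₊ + 1 : ℕ) ^ (q - 1) *
        (B * ∑ Q ∈ 𝒢, (⨍ x in Q, w x ∂μ) ^ q * ∫ x in Q, σ x ∂μ)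
      ≤ (⌊Real.log A⌋₊ + 1 : ℕ) ^ (q - 1) * (B * (M ^ q * (2 ^ Λ * ∫ x in S, w x ∂μ))) := by
        gcongr
        exact h.sum_setAverage_rpow_mul_setIntegral_le hpq hsub hw hσ hwS hlog hM0 hM
    _ ≤ (1 + Real.log A) ^ (q - 1) * (B * (M ^ q * (2 ^ Λ * ∫ x in S, w x ∂μ))) := by
        have : 0 ≤ ∫ x in S, w x ∂μ := integral_nonneg hw0
        gcongr
    _ = _ := by rw [testingConst, ← hB]; ring

end FiniteTesting

section SparseOperator

variable {X : Type*} [MeasurableSpace X] {μ : Measure X} {Λ p q A M : ℝ} {𝒮 : Set (Set X)}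
  {w σ : X → ℝ} {R : Set X}

/-- The sparse operator `f ↦ ∑_{Q ∈ 𝒮} ⟨f⟩_Q χ_Q` on nonnegative functions. The sum is taken in
`ℝ≥0∞`, and negative averages are truncated to `0`. -/
def sparseOperator (μ : Measure X) (𝒮 : Set (Set X)) (f : X → ℝ) (x : X) : ℝ≥0∞ :=
  ∑' Q : 𝒮, Q.1.indicator (fun _ => ENNReal.ofReal (⨍ y in Q.1, f y ∂μ)) x

theorem sum_indicator_ofReal_setAverage_rpow (𝒢 : Finset 𝒮) (hw : ∀ x, 0 ≤ w x) (hq : 0 ≤ q)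
    (x : X) :
    (∑ Q ∈ 𝒢, Q.1.indicator (fun _ => ENNReal.ofReal (⨍ y in Q.1, w y ∂μ)) x) ^ q =
      ENNReal.ofReal ((∑ Q ∈ 𝒢.map (.subtype _),
        Q.indicator (fun _ => ⨍ y in Q, w y ∂μ) x) ^ q) := by
  have hnonneg : ∀ Q : Set X, 0 ≤ Q.indicator (fun _ => ⨍ y in Q, w y ∂μ) x := fun Q =>
    indicator_nonneg (fun _ _ => setAverage_nonneg hw) x
  rw [Finset.sum_map, ← ENNReal.ofReal_rpow_of_nonneg (Finset.sum_nonneg fun Q _ => hnonneg _) hq,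
    ENNReal.ofReal_sum_of_nonneg fun Q _ => hnonneg _]
  refine congrArg (· ^ q) (Finset.sum_congr rfl fun Q _ => ?_)
  exact congrFun (indicator_comp_of_zero (g := ENNReal.ofReal) ENNReal.ofReal_zero) x

theorem lintegral_sparseOperator_rpow_le (hc : 𝒮.Countable) (hmeas : ∀ Q ∈ 𝒮, MeasurableSet Q)
    (hw : ∀ x, 0 ≤ w x) (hq : 0 < q) {ν : Measure X} {b : ℝ≥0∞}
    (hb : ∀ 𝒢 : Finset (Set X), ↑𝒢 ⊆ 𝒮 →
      ∫⁻ x, ENNReal.ofReal ((∑ Q ∈ 𝒢, Q.indicator (fun _ => ⨍ y in Q, w y ∂μ) x) ^ q) ∂ν ≤ b) :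
    ∫⁻ x, sparseOperator μ 𝒮 w x ^ q ∂ν ≤ b := by
  have : Countable 𝒮 := hc
  set F : Finset 𝒮 → X → ℝ≥0∞ := fun 𝒢 x =>
    (∑ Q ∈ 𝒢, Q.1.indicator (fun _ => ENNReal.ofReal (⨍ y in Q.1, w y ∂μ)) x) ^ q
  have hFmeas : ∀ 𝒢, Measurable (F 𝒢) := fun 𝒢 =>
    (Finset.measurable_fun_sum _ fun Q _ =>
      measurable_const.indicator (hmeas Q.1 Q.2)).pow_const q
  have hFmono : Monotone F := fun 𝒢 ℋ hsub x =>
    ENNReal.rpow_le_rpow (Finset.sum_le_sum_of_subset hsub) hq.le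
  have hsup : ∀ x, sparseOperator μ 𝒮 w x ^ q = ⨆ 𝒢, F 𝒢 x := fun x => by
    rw [sparseOperator, ENNReal.tsum_eq_iSup_sum]
    exact (ENNReal.orderIsoRpow q hq).map_iSup _
  rw [lintegral_congr hsup, lintegral_iSup_directed (fun 𝒢 => (hFmeas 𝒢).aemeasurable)
    hFmono.directed_le]
  refine iSup_le fun 𝒢 => (lintegral_congr fun x =>
    sum_indicator_ofReal_setAverage_rpow 𝒢 hw hq.le x).trans_le (hb _ fun Q hQ => ?_)
  obtain ⟨P, -, rfl⟩ := Finset.mem_map.1 (Finset.mem_coe.1 hQ)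
  exact P.2

theorem measurable_sparseOperator (hc : 𝒮.Countable) (hmeas : ∀ Q ∈ 𝒮, MeasurableSet Q) :
    Measurable (sparseOperator μ 𝒮 w) := by
  have : Countable 𝒮 := hc
  exact Measurable.tsum fun Q => measurable_const.indicator (hmeas Q.1 Q.2)

theorem IsCarlesonFamily.countable (h : IsCarlesonFamily μ Λ 𝒮) (hsub : ∀ Q ∈ 𝒮, Q ⊆ R)
    (hw : ∀ x, 0 < w x) (hwR : IntegrableOn w R μ)
    (hlog : IntegrableOn (fun x => Real.log (w x)) R μ) : 𝒮.Countable := by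
  set mass : 𝒮 → ℝ := fun Q => Real.exp (⨍ x in Q.1, Real.log (w x) ∂μ) * μ.real Q.1
  have hpos : ∀ Q, 0 < mass Q := fun Q => mul_pos (Real.exp_pos _) (h.measureReal_pos Q.2)
  have hsum : Summable mass := summable_of_sum_le (fun Q => (hpos Q).le) fun 𝒢 => by
    have hmem : ∀ Q ∈ 𝒢.map (.subtype _), Q ∈ 𝒮 := fun Q hQ => by
      obtain ⟨P, -, rfl⟩ := Finset.mem_map.1 hQ
      exact P.2
    exact (Finset.sum_map 𝒢 (.subtype _)
      fun Q => Real.exp (⨍ x in Q, Real.log (w x) ∂μ) * μ.real Q).symm.trans_le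
        ((h.mono hmem).sum_exp_setAverage_log_mul_le (fun Q hQ => hsub Q (hmem Q hQ)) hw hwR hlog)
  have hsupport : Function.support mass = univ := eq_univ_of_forall fun Q => (hpos Q).ne'
  exact countable_univ_iff.1 (hsupport ▸ hsum.countable_support)

theorem setLIntegral_mul_ofReal_le {f : X → ℝ≥0∞} (hf : Measurable f)
    (hσR : IntegrableOn σ R μ) :
    ∫⁻ x in R, f x * ENNReal.ofReal (σ x) ∂μ ≤
      ∫⁻ x, f x ∂(μ.withDensity fun x => ENNReal.ofReal (σ x)) := by
  have hle : (μ.restrict R).withDensity (fun x => ENNReal.ofReal (σ x)) ≤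
      μ.withDensity fun x => ENNReal.ofReal (σ x) := Measure.le_iff.2 fun s hs => by
    rw [withDensity_apply _ hs, withDensity_apply _ hs]
    exact lintegral_mono' (Measure.restrict_mono subset_rfl Measure.restrict_le_self) le_rfl
  refine le_trans (le_of_eq ?_) (lintegral_mono' hle le_rfl)
  rw [lintegral_withDensity_eq_lintegral_mul₀ hσR.aemeasurable.ennreal_ofReal hf.aemeasurable]
  simp only [Pi.mul_apply, mul_comm]

theorem IsCarlesonFamily.setLIntegral_sparseOperator_rpow_mul_le (h : IsCarlesonFamily μ Λ 𝒮)
    (hΛ : 0 < Λ) (hpq : p.HolderConjugate q) (hsub : ∀ Q ∈ 𝒮, Q ⊆ R) (hw : ∀ x, 0 < w x)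
    (hσ : ∀ x, 0 ≤ σ x) (hwR : IntegrableOn w R μ) (hσR : IntegrableOn σ R μ)
    (hlog : IntegrableOn (fun x => Real.log (w x)) R μ) (hA1 : 1 ≤ A)
    (hA : ∀ Q ∈ 𝒮, jointAp μ p w σ Q ∈ Icc 1 A) (hM0 : 0 ≤ M)
    (hM : ∀ Q ∈ 𝒮, jointAp μ p w σ Q ^ (1 / p) * expAinfty μ w Q ^ (1 / q) ≤ M) :
    ∫⁻ x in R, sparseOperator μ 𝒮 w x ^ q * ENNReal.ofReal (σ x) ∂μ ≤
      ENNReal.ofReal (testingConst Λ p q * (1 + Real.log A) ^ (q - 1) * M ^ q *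
        ∫ x in R, w x ∂μ) := by
  have hc := h.countable hsub hw hwR hlog
  exact (setLIntegral_mul_ofReal_le ((measurable_sparseOperator hc h.measurableSet).pow_const q)
    hσR).trans <| lintegral_sparseOperator_rpow_le hc h.measurableSet (fun x => (hw x).le)
      hpq.symm.pos fun 𝒢 h𝒢 => (h.mono h𝒢).lintegral_rpow_sum_indicator_setAverage_le_log hΛ hpq
        (fun Q hQ => hsub Q (h𝒢 hQ)) hw hσ hwR hσR hlog hA1 (fun Q hQ => hA Q (h𝒢 hQ)) hM0
        fun Q hQ => hM Q (h𝒢 hQ)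

end SparseOperator

section JensenBounds

variable {X : Type*} [MeasurableSpace X] {μ : Measure X} {p q : ℝ} {w σ : X → ℝ} {P Q : Set X}

theorem jointAp_congr_ae (h : P =ᵐ[μ] Q) : jointAp μ p w σ P = jointAp μ p w σ Q := by
  simp only [jointAp, setAverage_congr h]

theorem expAinfty_congr_ae (h : P =ᵐ[μ] Q) : expAinfty μ w P = expAinfty μ w Q := by
  simp only [expAinfty, setAverage_congr h]

theorem one_le_expAinfty (h0 : μ Q ≠ 0) (ht : μ Q ≠ ∞) (hw : ∀ x, 0 < w x)
    (hwQ : IntegrableOn w Q μ) (hlog : IntegrableOn (fun x => Real.log (w x)) Q μ) :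
    1 ≤ expAinfty μ w Q := by
  rw [expAinfty, Real.exp_neg, ← div_eq_mul_inv, one_le_div (Real.exp_pos _)]
  exact exp_setAverage_log_le h0 ht hw hwQ hlog

theorem expAinfty_le_jointAp (hp : 1 < p) (h0 : μ Q ≠ 0) (ht : μ Q ≠ ∞) (hw : ∀ x, 0 < w x)
    (hσQ : IntegrableOn (fun x => w x ^ (-(1 / (p - 1)))) Q μ)
    (hlog : IntegrableOn (fun x => Real.log (w x)) Q μ) :
    expAinfty μ w Q ≤ jointAp μ p w (fun x => w x ^ (-(1 / (p - 1)))) Q := by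
  have hp' : 0 < p - 1 := sub_pos.2 hp
  have hlogσ : ∀ x, Real.log (w x ^ (-(1 / (p - 1)))) = -(1 / (p - 1)) * Real.log (w x) :=
    fun x => Real.log_rpow (hw x) _
  have hjensen := exp_setAverage_log_le h0 ht (fun x => Real.rpow_pos_of_pos (hw x) _) hσQ
    (by simp only [hlogσ]; exact hlog.const_mul _)
  have hexp : Real.exp (-⨍ x in Q, Real.log (w x) ∂μ) =
      Real.exp (⨍ x in Q, Real.log (w x ^ (-(1 / (p - 1)))) ∂μ) ^ (p - 1) := by
    simp only [hlogσ, setAverage_eq, integral_const_mul, smul_eq_mul, ← Real.exp_mul]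
    field_simp
  rw [expAinfty, jointAp, hexp]
  gcongr
  exact setAverage_nonneg fun x => (hw x).le

theorem rpow_one_div_mul_rpow_one_div_le {a b : ℝ} (hpq : p.HolderConjugate q) (hb : 0 ≤ b)
    (hba : b ≤ a) : a ^ (1 / p) * b ^ (1 / q) ≤ a := by
  have hp := hpq.one_div_nonneg
  have hq := hpq.symm.one_div_nonneg
  have ha := hb.trans hba
  calc a ^ (1 / p) * b ^ (1 / q) ≤ a ^ (1 / p) * a ^ (1 / q) := by gcongr
    _ = a := by
        rw [← Real.rpow_add_of_nonneg ha hp hq, hpq.one_div_add_one_div, div_one, Real.rpow_one]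

theorem sumBelow_measureReal_le_of_pairwiseDisjoint {𝒢 : Finset (Set X)} {E : Set X → Set X}
    {Λ : ℝ} (hE : ∀ P ∈ 𝒢, MeasurableSet (E P)) (hsub : ∀ P ∈ 𝒢, E P ⊆ P)
    (hd : (𝒢 : Set (Set X)).PairwiseDisjoint E) (hΛ : 0 ≤ Λ)
    (hle : ∀ P ∈ 𝒢, μ.real P ≤ Λ * μ.real (E P)) (hQ : μ Q ≠ ∞) :
    sumBelow 𝒢 μ.real Q ≤ Λ * μ.real Q := by
  classical
  have hmem : ∀ P ∈ 𝒢.filter (· ≤ Q), P ∈ 𝒢 := fun P hP => (Finset.mem_filter.1 hP).1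
  have hEQ : ∀ P ∈ 𝒢.filter (· ≤ Q), E P ⊆ Q := fun P hP =>
    (hsub P (hmem P hP)).trans (Finset.mem_filter.1 hP).2
  calc sumBelow 𝒢 μ.real Q
      ≤ ∑ P ∈ 𝒢.filter (· ≤ Q), Λ * μ.real (E P) :=
        Finset.sum_le_sum fun P hP => hle P (hmem P hP)
    _ = Λ * μ.real (⋃ P ∈ 𝒢.filter (· ≤ Q), E P) := by
        rw [← Finset.mul_sum, measureReal_biUnion_finset (hd.subset hmem)
          (fun P hP => hE P (hmem P hP)) fun P hP => measure_ne_top_of_subset (hEQ P hP) hQ]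
    _ ≤ Λ * μ.real Q := by
        gcongr
        exact iUnion₂_subset hEQ

end JensenBounds

section Sparse

variable {n : ℕ} {𝒮 𝒯 : Set (Set (Fin n → ℝ))} {Q : Set (Fin n → ℝ)}

theorem strictUnion_mono (h : 𝒮 ⊆ 𝒯) : strictUnion 𝒮 Q ⊆ strictUnion 𝒯 Q :=
  biUnion_subset_biUnion_left fun _ hP => ⟨h hP.1, hP.2⟩

theorem IsSparse.mono (h : IsSparse 𝒯) (hsub : 𝒮 ⊆ 𝒯) : IsSparse 𝒮 := fun Q hQ =>
  (measure_mono (strictUnion_mono hsub)).trans (h Q (hsub hQ))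

theorem IsLaminar.pairwiseDisjoint_Eset (h : IsLaminar 𝒮) : 𝒮.PairwiseDisjoint (Eset 𝒮) := by
  have hsub : ∀ P ∈ 𝒮, ∀ Q, P ⊂ Q → Disjoint (Eset 𝒮 P) (Eset 𝒮 Q) := fun P hP Q hPQ =>
    disjoint_sdiff_right.mono_left <| sdiff_subset.trans <|
      subset_biUnion_of_mem (s := {P | P ∈ 𝒮 ∧ P ⊂ Q}) (u := id) ⟨hP, hPQ⟩
  intro P hP Q hQ hne
  rcases h P hP Q hQ with hPQ | hQP | hd
  · exact hsub P hP Q (hPQ.ssubset_of_ne hne)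
  · exact (hsub Q hQ P (hQP.ssubset_of_ne hne.symm)).symm
  · exact hd.mono sdiff_subset sdiff_subset

theorem measurableSet_Eset (hc : 𝒮.Countable) (hmeas : ∀ P ∈ 𝒮, MeasurableSet P) (hQ : Q ∈ 𝒮) :
    MeasurableSet (Eset 𝒮 Q) :=
  (hmeas Q hQ).diff <| .biUnion (hc.mono fun _ hP => hP.1) fun P hP => hmeas P hP.1

theorem IsSparse.measureReal_le_two_mul (h : IsSparse 𝒮) (hQ : Q ∈ 𝒮) (hfin : volume Q ≠ ∞) :
    volume.real Q ≤ 2 * volume.real (Eset 𝒮 Q) := by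
  have hhalf : volume Q / 2 ≤ volume (Eset 𝒮 Q) :=
    calc volume Q / 2 = volume Q - volume Q / 2 := (ENNReal.sub_half hfin).symm
      _ ≤ volume Q - volume (strictUnion 𝒮 Q) := tsub_le_tsub_left (h Q hQ) _
      _ ≤ volume (Eset 𝒮 Q) := le_measure_sdiff
  have := ENNReal.toReal_mono (measure_ne_top_of_subset sdiff_subset hfin) hhalf
  rw [ENNReal.toReal_div, ENNReal.toReal_ofNat] at this
  rw [← div_le_iff₀' two_pos]
  exact this

theorem IsSparse.isCarlesonFamily (h : IsSparse 𝒮) (hmeas : ∀ Q ∈ 𝒮, MeasurableSet Q)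
    (h0 : ∀ Q ∈ 𝒮, volume Q ≠ 0) (ht : ∀ Q ∈ 𝒮, volume Q ≠ ∞) (hlam : IsLaminar 𝒮) :
    IsCarlesonFamily volume 2 𝒮 where
  measurableSet := hmeas
  measure_ne_zero := h0
  measure_ne_top := ht
  laminar := hlam
  packing 𝒢 h𝒢 Q hQ := by
    have hE : ∀ P ∈ 𝒢, MeasurableSet (Eset ↑𝒢 P) := fun P hP =>
      measurableSet_Eset 𝒢.countable_toSet (fun P hP => hmeas P (h𝒢 hP)) hP
    exact sumBelow_measureReal_le_of_pairwiseDisjoint hE (fun _ _ => sdiff_subset)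
      (hlam.mono h𝒢).pairwiseDisjoint_Eset zero_le_two
      (fun P hP => (h.mono h𝒢).measureReal_le_two_mul hP (ht P (h𝒢 hP))) (ht Q (h𝒢 hQ))

end Sparse

section Cubes

variable {n : ℕ} {p : ℝ} {w : (Fin n → ℝ) → ℝ} {Q : Set (Fin n → ℝ)}
  {𝒟 𝒮 : Set (Set (Fin n → ℝ))}

theorem avg_eq_setAverage (Q : Set (Fin n → ℝ)) (f : (Fin n → ℝ) → ℝ) :
    avg Q f = ⨍ x in Q, f x :=
  (setAverage_eq volume f Q).symm

theorem ApQ_eq_jointAp : ApQ p w Q = jointAp volume p w (fun x => w x ^ (-(1 / (p - 1)))) Q := by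
  simp only [ApQ, jointAp, avg_eq_setAverage]

theorem AexpQ_eq_expAinfty : AexpQ w Q = expAinfty volume w Q := by
  simp only [AexpQ, expAinfty, avg_eq_setAverage]

theorem sparseT_eq_sparseOperator : sparseT 𝒮 w = sparseOperator volume 𝒮 w := by
  simp only [funext_iff, sparseT, sparseOperator, avg_eq_setAverage, implies_true]

theorem IsCube.isCompact (hQ : IsCube Q) : IsCompact Q := by
  obtain ⟨a, l, -, rfl⟩ := hQ
  exact isCompact_Icc

theorem IsCube.volume_ne_top (hQ : IsCube Q) : volume Q ≠ ∞ :=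
  hQ.isCompact.measure_ne_top

theorem IsCube.volume_ne_zero (hQ : IsCube Q) : volume Q ≠ 0 := by
  obtain ⟨a, l, hl, rfl⟩ := hQ
  simp [Real.volume_Icc_pi, hl]

theorem IsDyadicCubeOf.exists_isCube_ae_eq {k : ℤ} (hQ : IsDyadicCubeOf k Q) :
    ∃ P, IsCube P ∧ Q =ᵐ[volume] P := by
  obtain ⟨a, rfl⟩ := hQ
  exact ⟨_, ⟨a, (2 : ℝ) ^ k, by positivity, rfl⟩, Measure.univ_pi_Ico_ae_eq_Icc⟩

theorem IsDyadicCubeOf.measurableSet {k : ℤ} (hQ : IsDyadicCubeOf k Q) : MeasurableSet Q := by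
  obtain ⟨a, rfl⟩ := hQ
  exact MeasurableSet.univ_pi fun _ => measurableSet_Ico

theorem IsDyadicGrid.exists_isCube_ae_eq (h : IsDyadicGrid 𝒟) (hQ : Q ∈ 𝒟) :
    ∃ P, IsCube P ∧ Q =ᵐ[volume] P := by
  obtain ⟨k, hk⟩ := h.1 Q hQ
  exact hk.exists_isCube_ae_eq

theorem IsDyadicGrid.isCarlesonFamily (h : IsDyadicGrid 𝒟) (hsub : 𝒮 ⊆ 𝒟) (hs : IsSparse 𝒮) :
    IsCarlesonFamily volume 2 𝒮 := by
  refine hs.isCarlesonFamily (fun Q hQ => ?_) (fun Q hQ => ?_) (fun Q hQ => ?_)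
    fun Q hQ P hP => h.2.1 Q (hsub hQ) P (hsub hP)
  · obtain ⟨k, hk⟩ := h.1 Q (hsub hQ)
    exact hk.measurableSet
  all_goals
    obtain ⟨P, hP, hQP⟩ := h.exists_isCube_ae_eq (hsub hQ)
    rw [measure_congr hQP]
  · exact hP.volume_ne_zero
  · exact hP.volume_ne_top

end Cubes

section Weights

variable {n : ℕ} {p q : ℝ} {w : (Fin n → ℝ) → ℝ} {Q : Set (Fin n → ℝ)} {𝒟 : Set (Set (Fin n → ℝ))}

/-- The class `A_p` of Muckenhoupt weights. Local integrability of `log w`, which gives `A_∞^exp`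
its meaning, is part of the definition. -/
structure IsApWeight (p : ℝ) (w : (Fin n → ℝ) → ℝ) : Prop where
  pos : ∀ x, 0 < w x
  locallyIntegrable : LocallyIntegrable w
  locallyIntegrable_dual : LocallyIntegrable fun x => w x ^ (-(1 / (p - 1)))
  locallyIntegrable_log : LocallyIntegrable fun x => Real.log (w x)
  bddAbove : BddAbove (range fun Q : {Q : Set (Fin n → ℝ) // IsCube Q} => ApQ p w Q.1)

/-- The `A_p` characteristic `[w]_{A_p}`. -/
def apConst (p : ℝ) (w : (Fin n → ℝ) → ℝ) : ℝ :=
  ⨆ Q : {Q : Set (Fin n → ℝ) // IsCube Q}, ApQ p w Q.1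

/-- The mixed characteristic `[w]_{(A_p)^{1/p}(A_∞^exp)^{1/q}}`. -/
def mixedConst (p q : ℝ) (w : (Fin n → ℝ) → ℝ) : ℝ :=
  ⨆ Q : {Q : Set (Fin n → ℝ) // IsCube Q}, ApQ p w Q.1 ^ (1 / p) * AexpQ w Q.1 ^ (1 / q)

namespace IsApWeight

theorem one_le_AexpQ (h : IsApWeight p w) (hQ : IsCube Q) : 1 ≤ AexpQ w Q := by
  rw [AexpQ_eq_expAinfty]
  exact one_le_expAinfty hQ.volume_ne_zero hQ.volume_ne_top h.pos
    (h.locallyIntegrable.integrableOn_isCompact hQ.isCompact)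
    (h.locallyIntegrable_log.integrableOn_isCompact hQ.isCompact)

theorem AexpQ_le_ApQ (h : IsApWeight p w) (hp : 1 < p) (hQ : IsCube Q) :
    AexpQ w Q ≤ ApQ p w Q := by
  rw [AexpQ_eq_expAinfty, ApQ_eq_jointAp]
  exact expAinfty_le_jointAp hp hQ.volume_ne_zero hQ.volume_ne_top h.pos
    (h.locallyIntegrable_dual.integrableOn_isCompact hQ.isCompact)
    (h.locallyIntegrable_log.integrableOn_isCompact hQ.isCompact)

theorem one_le_ApQ (h : IsApWeight p w) (hp : 1 < p) (hQ : IsCube Q) : 1 ≤ ApQ p w Q :=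
  (h.one_le_AexpQ hQ).trans (h.AexpQ_le_ApQ hp hQ)

theorem ApQ_le_apConst (h : IsApWeight p w) (hQ : IsCube Q) : ApQ p w Q ≤ apConst p w :=
  le_ciSup h.bddAbove ⟨Q, hQ⟩

theorem rpow_ApQ_mul_rpow_AexpQ_le_mixedConst (h : IsApWeight p w) (hpq : p.HolderConjugate q)
    (hQ : IsCube Q) : ApQ p w Q ^ (1 / p) * AexpQ w Q ^ (1 / q) ≤ mixedConst p q w :=
  le_ciSup (f := fun Q : {Q : Set (Fin n → ℝ) // IsCube Q} =>
    ApQ p w Q.1 ^ (1 / p) * AexpQ w Q.1 ^ (1 / q))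
    (h.bddAbove.range_mono _ fun Q => rpow_one_div_mul_rpow_one_div_le hpq
      (zero_le_one.trans (h.one_le_AexpQ Q.2)) (h.AexpQ_le_ApQ hpq.lt Q.2)) ⟨Q, hQ⟩

theorem mixedConst_nonneg (h : IsApWeight p w) (hp : 1 < p) (q : ℝ) : 0 ≤ mixedConst p q w :=
  Real.iSup_nonneg fun Q => mul_nonneg
    (Real.rpow_nonneg (zero_le_one.trans (h.one_le_ApQ hp Q.2)) _)
    (Real.rpow_nonneg (zero_le_one.trans (h.one_le_AexpQ Q.2)) _)

theorem jointAp_mem_Icc (h : IsApWeight p w) (hp : 1 < p) (h𝒟 : IsDyadicGrid 𝒟) (hQ : Q ∈ 𝒟) :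
    jointAp volume p w (fun x => w x ^ (-(1 / (p - 1)))) Q ∈ Icc 1 (apConst p w) := by
  obtain ⟨P, hP, hQP⟩ := h𝒟.exists_isCube_ae_eq hQ
  rw [jointAp_congr_ae hQP, ← ApQ_eq_jointAp]
  exact ⟨h.one_le_ApQ hp hP, h.ApQ_le_apConst hP⟩

theorem rpow_jointAp_mul_rpow_expAinfty_le_mixedConst (h : IsApWeight p w)
    (hpq : p.HolderConjugate q) (h𝒟 : IsDyadicGrid 𝒟) (hQ : Q ∈ 𝒟) :
    jointAp volume p w (fun x => w x ^ (-(1 / (p - 1)))) Q ^ (1 / p) *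
      expAinfty volume w Q ^ (1 / q) ≤ mixedConst p q w := by
  obtain ⟨P, hP, hQP⟩ := h𝒟.exists_isCube_ae_eq hQ
  rw [jointAp_congr_ae hQP, expAinfty_congr_ae hQP, ← ApQ_eq_jointAp, ← AexpQ_eq_expAinfty]
  exact h.rpow_ApQ_mul_rpow_AexpQ_le_mixedConst hpq hP

end IsApWeight

end Weights

theorem stmt12_general {X : Type*} [MeasurableSpace X] {μ : Measure X} {Λ p q : ℝ} (hΛ : 0 < Λ)
    (hpq : p.HolderConjugate q) {𝒮 : Set (Set X)} (h𝒮 : IsCarlesonFamily μ Λ 𝒮) {R : Set X}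
    (hR : ∀ Q ∈ 𝒮, Q ⊆ R) {w σ : X → ℝ} (hw : ∀ x, 0 < w x) (hσ : ∀ x, 0 ≤ σ x)
    (hwR : IntegrableOn w R μ) (hσR : IntegrableOn σ R μ)
    (hlog : IntegrableOn (fun x => Real.log (w x)) R μ) {A M : ℝ} (hA1 : 1 ≤ A) (hM0 : 0 ≤ M)
    (hA : ∀ Q ∈ 𝒮, jointAp μ p w σ Q ∈ Icc 1 A)
    (hM : ∀ Q ∈ 𝒮, jointAp μ p w σ Q ^ (1 / p) * expAinfty μ w Q ^ (1 / q) ≤ M) :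
    (∫⁻ x in R, sparseOperator μ 𝒮 w x ^ q * ENNReal.ofReal (σ x) ∂μ) ^ (1 / q) ≤
      ENNReal.ofReal (testingConst Λ p q ^ (1 / q) * (1 + Real.log A) ^ (1 / p) * M *
        (∫ x in R, w x ∂μ) ^ (1 / q)) := by
  have hq := hpq.symm.one_div_nonneg
  have hconst := (testingConst_pos hΛ hpq.lt hpq.symm.lt).le
  have hlogA : 0 ≤ 1 + Real.log A := add_nonneg zero_le_one (Real.log_nonneg hA1)
  have hwint : 0 ≤ ∫ x in R, w x ∂μ := integral_nonneg fun x => (hw x).le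
  have hexponent : (q - 1) * (1 / q) = 1 / p := by
    rw [sub_mul, mul_one_div_cancel hpq.symm.ne_zero, one_mul, one_div, one_div,
      hpq.symm.one_sub_inv]
  refine (ENNReal.rpow_le_rpow (h𝒮.setLIntegral_sparseOperator_rpow_mul_le hΛ hpq hR hw hσ hwR hσR
    hlog hA1 hA hM0 hM) hq).trans_eq ?_
  rw [ENNReal.ofReal_rpow_of_nonneg (by positivity) hq, Real.mul_rpow (by positivity) hwint,
    Real.mul_rpow (by positivity) (by positivity), Real.mul_rpow hconst (by positivity),
    ← Real.rpow_mul hlogA, ← Real.rpow_mul hM0, hexponent,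
    mul_one_div_cancel hpq.symm.ne_zero, Real.rpow_one]

/-- Theorem (testing bound with logarithmic factor, exponential mixed constant):
for `w ∈ A_p`, `σ = w^{1-p'}`, and a sparse family `𝒮` of dyadic cubes,
`(∫_R (∑_{Q ∈ 𝒮, Q ⊆ R} (⨍_Q w) χ_Q)^{p'} σ)^{1/p'}
  ≲ (1 + log [w]_{A_p})^{1/p} [w]_{(A_p)^{1/p}(A_∞^exp)^{1/p'}} w(R)^{1/p'}`. -/
theorem stmt12 (p : ℝ) (hp : 1 < p) (n : ℕ) :
    ∃ C > (0 : ℝ), ∀ (𝒟 𝒮 : Set (Set (Fin n → ℝ))),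
      IsDyadicGrid 𝒟 → 𝒮 ⊆ 𝒟 → IsSparse 𝒮 →
      ∀ (w σ : (Fin n → ℝ) → ℝ), (∀ x, 0 < w x) →
      σ = (fun x => w x ^ (-(1 / (p - 1)))) →
      LocallyIntegrable w volume → LocallyIntegrable σ volume →
      LocallyIntegrable (fun x => Real.log (w x)) volume →
      BddAbove (Set.range fun Q : {Q : Set (Fin n → ℝ) // IsCube Q} => ApQ p w Q.1) →
      ∀ R : Set (Fin n → ℝ), IsCube R →
      (∫⁻ x in R, sparseT {Q | Q ∈ 𝒮 ∧ Q ⊆ R} w x ^ (p / (p - 1)) *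
          ENNReal.ofReal (σ x)) ^ ((p - 1) / p) ≤
        ENNReal.ofReal (C *
          (1 + Real.log (⨆ Q : {Q : Set (Fin n → ℝ) // IsCube Q}, ApQ p w Q.1)) ^ (1 / p) *
          (⨆ Q : {Q : Set (Fin n → ℝ) // IsCube Q},
            ApQ p w Q.1 ^ (1 / p) * AexpQ w Q.1 ^ ((p - 1) / p)) *
          (∫ x in R, w x) ^ ((p - 1) / p)) := by
  have hpq : p.HolderConjugate (p / (p - 1)) :=
    (Real.holderConjugate_iff_eq_conjExponent hp).2 rfl
  refine ⟨testingConst 2 p (p / (p - 1)) ^ (1 / (p / (p - 1))),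
    Real.rpow_pos_of_pos (testingConst_pos two_pos hp hpq.symm.lt) _, ?_⟩
  rintro 𝒟 𝒮 h𝒟 h𝒮 hsparse w _ hw rfl hwi hσi hlogi hbdd R hR
  have hAp : IsApWeight p w := ⟨hw, hwi, hσi, hlogi, hbdd⟩
  have hA1 : 1 ≤ apConst p w := (hAp.one_le_ApQ hp hR).trans (hAp.ApQ_le_apConst hR)
  have hCarleson : IsCarlesonFamily volume 2 {Q | Q ∈ 𝒮 ∧ Q ⊆ R} :=
    (h𝒟.isCarlesonFamily h𝒮 hsparse).mono (sep_subset _ _)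
  rw [sparseT_eq_sparseOperator, ← one_div_div p (p - 1)]
  exact stmt12_general two_pos hpq hCarleson (fun _ hQ => hQ.2) hw
    (fun x => Real.rpow_nonneg (hw x).le _) (hwi.integrableOn_isCompact hR.isCompact)
    (hσi.integrableOn_isCompact hR.isCompact) (hlogi.integrableOn_isCompact hR.isCompact) hA1
    (hAp.mixedConst_nonneg hp _) (fun _ hQ => hAp.jointAp_mem_Icc hp h𝒟 (h𝒮 hQ.1))
    fun _ hQ => hAp.rpow_jointAp_mul_rpow_expAinfty_le_mixedConst hpq h𝒟 (h𝒮 hQ.1)
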